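/- arXiv:1703.07692 — 5 statements merged into one kernel-verified Lean document; each statement's English description precedes it below -/
import Mathlib

section
/- Let Λ : ℝ → ℝ be a C¹ function which is 1-periodic and satisfies ∫₀¹ Λ(s) ds < 0, and let c > 0. Then the scalar linear differential equation z'(s) = c + Λ(s) z(s) admits a solution Δ : ℝ → ℝ which is C¹, 1-periodic, and strictly positive everywhere. -/
/-- If `Λ : ℝ → ℝ` is `C¹`, `1`-periodic and `∫₀¹ Λ < 0`, and `c > 0`,
then the linear ODE `z' = c + Λ z` admits a `C¹`, `1`-periodic, everywhere strictly
positive solution. -/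
theorem scalar_periodic_ode_positive_solution
    (Λ : ℝ → ℝ) (hΛ : ContDiff ℝ 1 Λ)
    (hper : ∀ s : ℝ, Λ (s + 1) = Λ s)
    (hint : (∫ s in (0:ℝ)..(1:ℝ), Λ s) < 0)
    (c : ℝ) (hc : 0 < c) :
    ∃ Δ : ℝ → ℝ, ContDiff ℝ 1 Δ ∧ (∀ s : ℝ, Δ (s + 1) = Δ s) ∧
      (∀ s : ℝ, 0 < Δ s) ∧
      (∀ s : ℝ, HasDerivAt Δ (c + Λ s * Δ s) s) := by
  have hcont : Continuous Λ := hΛ.continuous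
  obtain ⟨I, hI⟩ : ∃ I, I = ∫ s in (0:ℝ)..(1:ℝ), Λ s := ⟨_, rfl⟩
  rw [← hI] at hint
  obtain ⟨L, hL⟩ : ∃ L : ℝ → ℝ, L = fun s => ∫ t in (0:ℝ)..s, Λ t := ⟨_, rfl⟩
  have hLd : ∀ s, HasDerivAt L (Λ s) s := by
    intro s
    rw [hL]
    exact intervalIntegral.integral_hasDerivAt_right (hcont.intervalIntegrable _ _)
      hcont.aestronglyMeasurable.stronglyMeasurableAtFilter hcont.continuousAt
  have hLs : ∀ s, L (s + 1) = L s + I := by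
    intro s
    have hp : Function.Periodic Λ 1 := hper
    have h1 := hp.intervalIntegral_add_eq s 0
    have h2 := intervalIntegral.integral_add_adjacent_intervals
      (hcont.intervalIntegrable (μ := MeasureTheory.volume) 0 s)
      (hcont.intervalIntegrable (μ := MeasureTheory.volume) s (s + 1))
    rw [zero_add] at h1
    simp only [hL, hI]
    linarith
  have hLc : Continuous L := continuous_iff_continuousAt.2 fun s => (hLd s).continuousAt
  obtain ⟨E, hE⟩ : ∃ E : ℝ → ℝ, E = fun s => Real.exp (-L s) := ⟨_, rfl⟩
  have hEc : Continuous E := by rw [hE]; fun_prop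
  have hEpos : ∀ s, 0 < E s := by intro s; rw [hE]; exact Real.exp_pos _
  have hEL : ∀ s, Real.exp (L s) * E s = 1 := by
    intro s
    simp only [hE]
    rw [← Real.exp_add]; simp
  have hEs : ∀ s, E (s + 1) = Real.exp (-I) * E s := by
    intro s
    simp only [hE]
    rw [hLs, ← Real.exp_add]
    congr 1; ring
  obtain ⟨G, hG⟩ : ∃ G : ℝ → ℝ, G = fun s => ∫ t in (0:ℝ)..s, E t := ⟨_, rfl⟩
  have hGd : ∀ s, HasDerivAt G (E s) s := by
    intro s
    rw [hG]
    exact intervalIntegral.integral_hasDerivAt_right (hEc.intervalIntegrable _ _)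
      hEc.aestronglyMeasurable.stronglyMeasurableAtFilter hEc.continuousAt
  have hGH : ∀ a b, G b - G a = ∫ t in a..b, E t := by
    intro a b
    simp only [hG]
    exact intervalIntegral.integral_interval_sub_left
      (hEc.intervalIntegrable _ _) (hEc.intervalIntegrable _ _)
  have hHs : ∀ s, G (s + 1 + 1) - G (s + 1) = Real.exp (-I) * (G (s + 1) - G s) := by
    intro s
    rw [hGH, hGH, ← intervalIntegral.integral_const_mul,
      ← intervalIntegral.integral_comp_add_right (fun x => E x) 1]
    simp only [hEs]
  have hHpos : ∀ s, 0 < G (s + 1) - G s := by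
    intro s
    rw [hGH]
    exact intervalIntegral.intervalIntegral_pos_of_pos
      (hEc.intervalIntegrable _ _) hEpos (by linarith)
  have hq : 0 < Real.exp (-I) - 1 := by
    have := Real.one_lt_exp_iff.2 (neg_pos.2 hint)
    linarith
  obtain ⟨q, hqd⟩ : ∃ q, q = Real.exp (-I) - 1 := ⟨_, rfl⟩
  rw [← hqd] at hq
  have hD : ∀ s, HasDerivAt (fun s => c / q * (Real.exp (L s) * (G (s + 1) - G s)))
      (c + Λ s * (c / q * (Real.exp (L s) * (G (s + 1) - G s)))) s := by
    intro s
    have h1 := (((hLd s).exp).mul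
      (((hGd (s + 1)).comp_add_const s 1).sub (hGd s))).const_mul (c / q)
    refine h1.congr_deriv ?_
    have h2 : Real.exp (L s) * (E (s + 1) - E s) = q := by
      rw [hEs, hqd]
      linear_combination (Real.exp (-I) - 1) * hEL s
    have h3 : c / q * q = c := by field_simp
    simp only [Pi.sub_apply]
    linear_combination (c / q) * h2 + h3
  refine ⟨_, ?_, ?_, ?_, hD⟩
  · rw [contDiff_one_iff_deriv]
    refine ⟨fun s => (hD s).differentiableAt, ?_⟩
    rw [funext fun s => (hD s).deriv]
    have hGc : Continuous G := continuous_iff_continuousAt.2 fun s => (hGd s).continuousAt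
    fun_prop
  · intro s
    have h : Real.exp I * Real.exp (-I) = 1 := by rw [← Real.exp_add]; simp
    rw [hHs, hLs, Real.exp_add]
    linear_combination (c / q * Real.exp (L s) * (G (s + 1) - G s)) * h
  · intro s
    have := hHpos s
    positivity
end

section
/- For κ > 0 and ω > (3√3/4) κ, one has ∫₀^{2π} ( −κ (1 + cos s) cos s ) / ( ω − κ(1 + cos s) sin s ) ds < 0. Equivalently, ∫₀^{2π} ∂_z Win(s𝟙, s) / Win(s𝟙, s) ds < 0, where Win(Y, z) = ω − κ (1/N) Σⱼ (1 + cos yⱼ) sin z and ∂_z denotes the partial derivative in the last variable. -/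
open Real

lemma win_sq_bound (s : ℝ) : ((1 + Real.cos s) * Real.sin s) ^ 2 ≤ 27 / 16 := by
  have h := Real.sin_sq_add_cos_sq s
  have h1 : ((1 + Real.cos s) * Real.sin s) ^ 2
      = 27 / 16 - (Real.cos s - 1 / 2) ^ 2 * ((Real.cos s + 3 / 2) ^ 2 + 1 / 2) := by
    have h2 : Real.sin s ^ 2 = 1 - Real.cos s ^ 2 := by linarith
    rw [mul_pow, h2]; ring
  rw [h1]
  have : 0 ≤ (Real.cos s - 1 / 2) ^ 2 * ((Real.cos s + 3 / 2) ^ 2 + 1 / 2) := by positivity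
  linarith

lemma win_omega (κ ω : ℝ) (hκ : 0 < κ) (hω : ω > 3 * Real.sqrt 3 / 4 * κ) :
    0 < ω ∧ κ ^ 2 * (27 / 16) < ω ^ 2 := by
  have h3 : Real.sqrt 3 ^ 2 = 3 := Real.sq_sqrt (by norm_num)
  have hp : 0 < 3 * Real.sqrt 3 / 4 * κ := by positivity
  refine ⟨hp.trans hω, ?_⟩
  have : (3 * Real.sqrt 3 / 4 * κ) ^ 2 < ω ^ 2 := pow_lt_pow_left₀ hω hp.le (by norm_num)
  have e : (3 * Real.sqrt 3 / 4 * κ) ^ 2 = κ ^ 2 * (27 / 16) := by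
    rw [mul_pow, div_pow, mul_pow, h3]; ring
  linarith

lemma win_den_pos (κ ω : ℝ) (h0 : 0 < ω) (h : κ ^ 2 * (27 / 16) < ω ^ 2) (s : ℝ) :
    0 < ω - κ * (1 + Real.cos s) * Real.sin s ∧ 0 < ω + κ * (1 + Real.cos s) * Real.sin s := by
  have hb : (κ * (1 + Real.cos s) * Real.sin s) ^ 2 < ω ^ 2 := by
    have := mul_le_mul_of_nonneg_left (win_sq_bound s) (sq_nonneg κ)
    calc _ = κ ^ 2 * ((1 + Real.cos s) * Real.sin s) ^ 2 := by ring
      _ ≤ _ := this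
      _ < _ := h
  have := abs_lt_of_sq_lt_sq' hb h0.le
  constructor <;> linarith [this.1, this.2]

lemma win_den2_pos (κ ω : ℝ) (h : κ ^ 2 * (27 / 16) < ω ^ 2) (x : ℝ) (hx : x ^ 2 ≤ 1) :
    0 < ω ^ 2 - κ ^ 2 * x ^ 2 := by
  nlinarith [sq_nonneg κ, mul_le_mul_of_nonneg_left hx (sq_nonneg κ)]

lemma win_pointwise (κ ω : ℝ) (hκ : 0 < κ) (h0 : 0 < ω) (h : κ ^ 2 * (27 / 16) < ω ^ 2) (s : ℝ) :
    (-(κ * (1 + Real.cos s) * Real.cos s)) / (ω - κ * (1 + Real.cos s) * Real.sin s)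
    + (-(κ * (1 + Real.cos s) * Real.cos s)) / (ω + κ * (1 + Real.cos s) * Real.sin s)
    ≤ (-(2 * ω * κ)) * ((ω ^ 2 - κ ^ 2 * Real.sin s ^ 2)⁻¹ * Real.cos s)
      - (2 * κ / ω) * Real.cos s ^ 2 := by
  obtain ⟨p, q⟩ := win_den_pos κ ω h0 h s
  have hs := Real.sin_sq_le_one s
  have r := win_den2_pos κ ω h _ hs
  have hc := Real.neg_one_le_cos s
  generalize Real.cos s = c at *
  generalize Real.sin s = t at *
  have e : (-(κ * (1 + c) * c)) / (ω - κ * (1 + c) * t)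
    + (-(κ * (1 + c) * c)) / (ω + κ * (1 + c) * t)
    = -(2 * ω * κ) * ((1 + c) * c / ((ω - κ * (1 + c) * t) * (ω + κ * (1 + c) * t))) := by
    field_simp; ring
  have e2 : (-(2 * ω * κ)) * ((ω ^ 2 - κ ^ 2 * t ^ 2)⁻¹ * c) - (2 * κ / ω) * c ^ 2
      = -(2 * ω * κ) * ((ω ^ 2 - κ ^ 2 * t ^ 2)⁻¹ * c + c ^ 2 / ω ^ 2) := by
    field_simp; ring
  rw [e, e2]
  apply mul_le_mul_of_nonpos_left _ (by have := mul_pos h0 hκ; linarith)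
  have a1 : c ^ 2 / ω ^ 2 ≤ c ^ 2 / (ω ^ 2 - κ ^ 2 * t ^ 2) := by
    apply div_le_div_of_nonneg_left (sq_nonneg c) r
    nlinarith [mul_nonneg (sq_nonneg κ) (sq_nonneg t)]
  have a2 : (1 + c) * c / (ω ^ 2 - κ ^ 2 * t ^ 2)
      ≤ (1 + c) * c / ((ω - κ * (1 + c) * t) * (ω + κ * (1 + c) * t)) := by
    rw [div_le_div_iff₀ r (mul_pos p q)]
    have : 0 ≤ (1 + c) * (κ * t) ^ 2 * c ^ 2 * (2 + c) := by
      have h1 : 0 ≤ 1 + c := by linarith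
      have h2 : 0 ≤ 2 + c := by linarith
      positivity
    nlinarith [this]
  calc _ ≤ (ω ^ 2 - κ ^ 2 * t ^ 2)⁻¹ * c + c ^ 2 / (ω ^ 2 - κ ^ 2 * t ^ 2) := by linarith
    _ = (1 + c) * c / (ω ^ 2 - κ ^ 2 * t ^ 2) := by ring
    _ ≤ _ := a2

lemma win_int_zero (κ ω : ℝ) (h : κ ^ 2 * (27 / 16) < ω ^ 2) :
    (∫ s in (0:ℝ)..(2 * π), (ω ^ 2 - κ ^ 2 * Real.sin s ^ 2)⁻¹ * Real.cos s) = 0 := by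
  have := intervalIntegral.integral_comp_mul_deriv' (a := 0) (b := 2 * π)
    (f := Real.sin) (f' := Real.cos) (g := fun x => (ω ^ 2 - κ ^ 2 * x ^ 2)⁻¹)
    (fun x _ => Real.hasDerivAt_sin x) Real.continuous_cos.continuousOn
    (by
      apply ContinuousOn.inv₀ (by fun_prop)
      rintro _ ⟨x, _, rfl⟩
      exact (win_den2_pos κ ω h _ (Real.sin_sq_le_one x)).ne')
  simpa using this

lemma win_main (κ ω : ℝ) (hκ : 0 < κ) (hω : ω > 3 * Real.sqrt 3 / 4 * κ) :
    (∫ s in (0:ℝ)..(2 * π),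
        (-(κ * (1 + Real.cos s) * Real.cos s)) /
          (ω - κ * (1 + Real.cos s) * Real.sin s)) < 0 := by
  obtain ⟨h0, h⟩ := win_omega κ ω hκ hω
  have c1 : Continuous fun s : ℝ => (-(κ * (1 + Real.cos s) * Real.cos s)) /
          (ω - κ * (1 + Real.cos s) * Real.sin s) :=
    Continuous.div (by fun_prop) (by fun_prop) fun s => (win_den_pos κ ω h0 h s).1.ne'
  have c2 : Continuous fun s : ℝ => (-(κ * (1 + Real.cos s) * Real.cos s)) /
          (ω + κ * (1 + Real.cos s) * Real.sin s) :=
    Continuous.div (by fun_prop) (by fun_prop) fun s => (win_den_pos κ ω h0 h s).2.ne'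
  have c3 : Continuous fun s : ℝ => (ω ^ 2 - κ ^ 2 * Real.sin s ^ 2)⁻¹ * Real.cos s :=
    Continuous.mul (Continuous.inv₀ (by fun_prop)
      fun s => (win_den2_pos κ ω h _ (Real.sin_sq_le_one s)).ne') (by fun_prop)
  have c4 : Continuous fun s : ℝ => Real.cos s ^ 2 := by fun_prop
  have sym : (∫ s in (0:ℝ)..(2 * π), (-(κ * (1 + Real.cos s) * Real.cos s)) /
          (ω + κ * (1 + Real.cos s) * Real.sin s)) =
      ∫ s in (0:ℝ)..(2 * π), (-(κ * (1 + Real.cos s) * Real.cos s)) /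
          (ω - κ * (1 + Real.cos s) * Real.sin s) := by
    have := intervalIntegral.integral_comp_sub_left (a := 0) (b := 2 * π)
      (fun s : ℝ => (-(κ * (1 + Real.cos s) * Real.cos s)) /
          (ω - κ * (1 + Real.cos s) * Real.sin s)) (2 * π)
    simpa [Real.cos_two_pi_sub, Real.sin_two_pi_sub] using this
  have mono := intervalIntegral.integral_mono (μ := MeasureTheory.volume)
    (by positivity : (0:ℝ) ≤ 2 * π)
    ((c1.add c2).intervalIntegrable 0 (2 * π))
    (((c3.const_mul (-(2 * ω * κ))).sub (c4.const_mul (2 * κ / ω))).intervalIntegrable 0 (2 * π))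
    (fun s => win_pointwise κ ω hκ h0 h s)
  simp only [Pi.add_apply, Pi.sub_apply] at mono
  rw [intervalIntegral.integral_add (c1.intervalIntegrable _ _) (c2.intervalIntegrable _ _),
    intervalIntegral.integral_sub ((c3.const_mul _).intervalIntegrable _ _)
      ((c4.const_mul _).intervalIntegrable _ _),
    intervalIntegral.integral_const_mul, intervalIntegral.integral_const_mul,
    win_int_zero κ ω h, integral_cos_sq, sym] at mono
  simp only [Real.sin_two_pi, Real.sin_zero] at mono
  have : 0 < 2 * κ / ω * π := by positivity
  ring_nf at mono this ⊢
  linarith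

/-- For `κ > 0` and `ω > (3√3/4)κ`,
`∫₀^{2π} (−κ(1 + cos s) cos s)/(ω − κ(1 + cos s) sin s) ds < 0`; equivalently,
`∫₀^{2π} ∂_z Win(s𝟙, s)/Win(s𝟙, s) ds < 0` for the Winfree coupling
`Win(Y, z) = ω − κ (1/N) Σⱼ (1 + cos yⱼ) sin z`. -/
theorem winfree_synchronization_hypothesis
    (κ ω : ℝ) (hκ : 0 < κ) (hω : ω > 3 * Real.sqrt 3 / 4 * κ)
    (N : ℕ) (hN : 0 < N)
    (Win : (Fin N → ℝ) → ℝ → ℝ)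
    (hWin : ∀ (Y : Fin N → ℝ) (z : ℝ),
      Win Y z = ω - κ * ((1 / (N : ℝ)) * ∑ j, (1 + Real.cos (Y j))) * Real.sin z) :
    (∫ s in (0:ℝ)..(2 * π),
        (-(κ * (1 + Real.cos s) * Real.cos s)) /
          (ω - κ * (1 + Real.cos s) * Real.sin s)) < 0 ∧
    (∫ s in (0:ℝ)..(2 * π),
        deriv (Win (fun _ => s)) s / Win (fun _ => s) s) < 0 := by
  have hm := win_main κ ω hκ hω
  refine ⟨hm, ?_⟩
  have hN' : (N : ℝ) ≠ 0 := by positivity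
  have hW : ∀ s z : ℝ, Win (fun _ => s) z = ω - κ * (1 + Real.cos s) * Real.sin z := by
    intro s z
    rw [hWin]
    simp only [Finset.sum_const, Finset.card_univ, Fintype.card_fin, nsmul_eq_mul]
    field_simp
  have hd : ∀ s : ℝ, deriv (Win (fun _ => s)) s = -(κ * (1 + Real.cos s) * Real.cos s) := by
    intro s
    have : Win (fun _ => s) = fun z => ω - κ * (1 + Real.cos s) * Real.sin z := funext (hW s)
    rw [this]
    exact (((Real.hasDerivAt_sin s).const_mul _).const_sub ω).deriv
  simpa only [hd, hW] using hm
end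

section
/- Let N ≥ 2 and let F : ℝᴺ × ℝ → ℝ satisfy hypotheses (H) and (H*), with L = ‖F‖_B + ‖dF‖_B + ‖d²F‖_B and α = min_{s∈[0,1]} F(s𝟙, s). Then there exists D* > 0 such that for every D ∈ (0, D*] there exists 𝓇 > 0 with the following property: for every C¹, 𝟙-periodic function H : ℝᴺ → ℝᴺ with ‖H‖_B < 𝓇, there exist X* ∈ ℝᴺ and θ* ∈ (1/L, 2/α) such that the solution X of the system xᵢ' = F(X, xᵢ) + Hᵢ(X) with X(t₀) = X* is defined for all t ≥ t₀ and satisfies X(t₀ + θ*) = X* + 𝟙, where 𝟙 = (1,…,1) ∈ ℝᴺ. -/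
open Real Set

noncomputable section

/-- The set `B ⊂ ℝᴺ⁺¹`: points `(Y, z)` all of whose pairwise coordinate differences
are at most `1`. -/
def memB {N : ℕ} (Y : Fin N → ℝ) (z : ℝ) : Prop :=
  (∀ i j : Fin N, |Y i - Y j| ≤ 1) ∧ (∀ i : Fin N, |Y i - z| ≤ 1)

/-- The set `B ⊂ ℝᴺ`: points all of whose pairwise coordinate differences are at
most `1`. -/
def memB' {N : ℕ} (Y : Fin N → ℝ) : Prop :=
  ∀ i j : Fin N, |Y i - Y j| ≤ 1

/-- Partial derivative of `F : ℝᴺ × ℝ → ℝ` in the `j`-th of the first `N` variables. -/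
def pder {N : ℕ} (F : (Fin N → ℝ) → ℝ → ℝ) (j : Fin N) (Y : Fin N → ℝ) (z : ℝ) : ℝ :=
  deriv (fun u => F (Function.update Y j u) z) (Y j)

/-- Partial derivative of `F : ℝᴺ × ℝ → ℝ` in the last variable. -/
def pderZ {N : ℕ} (F : (Fin N → ℝ) → ℝ → ℝ) (Y : Fin N → ℝ) (z : ℝ) : ℝ :=
  deriv (fun u => F Y u) z

/-- Values `|F(Y,z)|`, `(Y,z) ∈ B`. -/
def valsB {N : ℕ} (F : (Fin N → ℝ) → ℝ → ℝ) : Set ℝ :=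
  {x | ∃ Y z, memB Y z ∧ x = |F Y z|}

/-- Values of the absolute first partial derivatives of `F` on `B`. -/
def valsB_d {N : ℕ} (F : (Fin N → ℝ) → ℝ → ℝ) : Set ℝ :=
  {x | ∃ Y z, memB Y z ∧ (x = |pderZ F Y z| ∨ ∃ j, x = |pder F j Y z|)}

/-- Values of the absolute second partial derivatives of `F` on `B`. -/
def valsB_d2 {N : ℕ} (F : (Fin N → ℝ) → ℝ → ℝ) : Set ℝ :=
  {x | ∃ Y z, memB Y z ∧
    (x = |pderZ (fun Y' z' => pderZ F Y' z') Y z| ∨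
     (∃ j, x = |pder (fun Y' z' => pderZ F Y' z') j Y z|) ∨
     (∃ j, x = |pderZ (fun Y' z' => pder F j Y' z') Y z|) ∨
     (∃ j k, x = |pder (fun Y' z' => pder F j Y' z') k Y z|))}

/-- `‖F‖_B`. -/
def normB {N : ℕ} (F : (Fin N → ℝ) → ℝ → ℝ) : ℝ := sSup (valsB F)

/-- `‖dF‖_B`. -/
def normB_d {N : ℕ} (F : (Fin N → ℝ) → ℝ → ℝ) : ℝ := sSup (valsB_d F)

/-- `‖d²F‖_B`. -/
def normB_d2 {N : ℕ} (F : (Fin N → ℝ) → ℝ → ℝ) : ℝ := sSup (valsB_d2 F)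

/-- `‖H‖_B` for a map `H : ℝᴺ → ℝᴺ`. -/
def normB_vec {N : ℕ} (H : (Fin N → ℝ) → Fin N → ℝ) : ℝ :=
  sSup {x | ∃ Y, memB' Y ∧ ∃ i, x = |H Y i|}

/-- `L = ‖F‖_B + ‖dF‖_B + ‖d²F‖_B`. -/
def Lconst {N : ℕ} (F : (Fin N → ℝ) → ℝ → ℝ) : ℝ :=
  normB F + normB_d F + normB_d2 F

/-- `α = min_{s ∈ [0,1]} F(s𝟙, s)`. -/
def alphaConst {N : ℕ} (F : (Fin N → ℝ) → ℝ → ℝ) : ℝ :=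
  sInf ((fun s => F (fun _ => s) s) '' Set.Icc (0:ℝ) 1)

/-- `M = max_{s ∈ [0,1]} F(s𝟙, s)`. -/
def Mconst {N : ℕ} (F : (Fin N → ℝ) → ℝ → ℝ) : ℝ :=
  sSup ((fun s => F (fun _ => s) s) '' Set.Icc (0:ℝ) 1)

/-- Hypothesis `(H)`: `F` is `C²`, its `B`-norms `‖F‖_B, ‖dF‖_B, ‖d²F‖_B` are finite,
`F` is `𝟙`-periodic, and `min_{s∈[0,1]} F(s𝟙,s) > 0`. -/
def HypH {N : ℕ} (F : (Fin N → ℝ) → ℝ → ℝ) : Prop :=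
  ContDiff ℝ 2 (fun p : (Fin N → ℝ) × ℝ => F p.1 p.2) ∧
  BddAbove (valsB F) ∧ BddAbove (valsB_d F) ∧ BddAbove (valsB_d2 F) ∧
  (∀ (Y : Fin N → ℝ) (z : ℝ), F (fun i => Y i + 1) (z + 1) = F Y z) ∧
  0 < alphaConst F

/-- Hypothesis `(H*)`: `∫₀¹ ∂_z F(s𝟙, s)/F(s𝟙, s) ds < 0`. -/
def HypHstar {N : ℕ} (F : (Fin N → ℝ) → ℝ → ℝ) : Prop :=
  (∫ s in (0:ℝ)..(1:ℝ), pderZ F (fun _ => s) s / F (fun _ => s) s) < 0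

end

theorem br_poly {n : ℕ} (M : Matrix (Fin n) (Fin n) ℝ) :
    ∃ p : Polynomial ℝ, p.natDegree ≤ n ∧ ∀ t : ℝ, p.eval t = (1 + t • M).det := by
  refine ⟨((Polynomial.X : Polynomial ℝ) • M.map Polynomial.C + (1 : Matrix (Fin n) (Fin n) ℝ).map Polynomial.C).det, ?_, ?_⟩
  · simpa using Polynomial.natDegree_det_X_add_C_le M 1
  · intro t
    have := (Polynomial.evalRingHom t).map_det ((Polynomial.X : Polynomial ℝ) • M.map Polynomial.C + (1 : Matrix (Fin n) (Fin n) ℝ).map Polynomial.C)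
    rw [Polynomial.coe_evalRingHom] at this
    rw [this]
    congr 1
    ext i j
    by_cases hij : i = j
    · subst hij; simp; ring
    · simp [Matrix.one_apply_ne hij]; ring

theorem br_lagrange (n : ℕ) (ε : ℝ) (hε : 0 < ε) :
    ∃ (τ c : Fin (n+1) → ℝ), (∀ j, 0 < τ j ∧ τ j < ε) ∧ ∑ j, c j = 1 ∧
      ∀ p : Polynomial ℝ, p.natDegree ≤ n → p.eval 1 = ∑ j, c j * p.eval (τ j) := by
  let τ : Fin (n+1) → ℝ := fun j => ε / (j + 2)
  have hinj : InjOn τ (Finset.univ : Finset (Fin (n+1))) := by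
    intro i _ j _ h
    have hi : (0:ℝ) < (i:ℕ) + 2 := by positivity
    have hj : (0:ℝ) < (j:ℕ) + 2 := by positivity
    simp only [τ] at h
    rw [div_eq_div_iff hi.ne' hj.ne'] at h
    have := mul_left_cancel₀ hε.ne' h
    have h3 : ((i:ℕ):ℝ) = ((j:ℕ):ℝ) := by linarith
    exact Fin.ext (by exact_mod_cast h3)
  refine ⟨τ, fun j => (Lagrange.basis Finset.univ τ j).eval 1, ?_, ?_, ?_⟩
  · intro j
    refine ⟨by positivity, ?_⟩
    have hj : (0:ℝ) < (j:ℕ) + 2 := by positivity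
    rw [div_lt_iff₀ hj]
    have : (0:ℝ) ≤ (j:ℕ) := by positivity
    nlinarith
  · rw [← Polynomial.eval_finsetSum, Lagrange.sum_basis hinj Finset.univ_nonempty]; simp
  · intro p hp
    have h := Lagrange.eq_interpolate (f := p) hinj (by
      rw [Finset.card_univ, Fintype.card_fin]
      exact lt_of_le_of_lt Polynomial.degree_le_natDegree (by exact_mod_cast Nat.lt_succ_of_le hp))
    conv_lhs => rw [h]
    rw [Lagrange.interpolate_apply, Polynomial.eval_finsetSum]
    simp [mul_comm]

theorem br_no_retraction {n : ℕ} (R : ℝ) (hR : 0 < R)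
    (r : EuclideanSpace ℝ (Fin n) → EuclideanSpace ℝ (Fin n)) (hr : ContDiff ℝ 1 r)
    (h1 : ∀ x, ‖r x‖ = R) (h2 : ∀ x, ‖x‖ = R → r x = x) : False := by
  let E := EuclideanSpace ℝ (Fin n)
  -- displacement, cut off
  obtain ⟨K, hK⟩ := (hr.sub contDiff_id).contDiffOn.exists_lipschitzOnWith (n := 1) one_ne_zero
    (convex_closedBall (0:E) R) (isCompact_closedBall (0:E) R)
  classical
  let u : E → E := fun x => if ‖x‖ ≤ R then r x - x else 0
  have hu_in : ∀ x, ‖x‖ ≤ R → u x = r x - x := fun x hx => if_pos hx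
  have hu_out : ∀ x, R ≤ ‖x‖ → u x = 0 := by
    intro x hx
    by_cases h : ‖x‖ ≤ R
    · rw [hu_in x h, h2 x (le_antisymm h hx), sub_self]
    · exact if_neg h
  have hin : ∀ x y, ‖x‖ ≤ R → ‖y‖ ≤ R → dist (u x) (u y) ≤ K * dist x y := by
    intro x y hx hy
    rw [hu_in x hx, hu_in y hy]
    exact hK.dist_le_mul x (by simpa using hx) y (by simpa using hy)
  have hmix : ∀ x y, ‖x‖ ≤ R → R ≤ ‖y‖ → dist (u x) (u y) ≤ K * dist x y := by
    intro x y hx hy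
    obtain ⟨z, hz, hzR⟩ : ∃ z ∈ segment ℝ x y, ‖z‖ = R := by
      have := (convex_segment (𝕜 := ℝ) x y).isPreconnected.intermediate_value (left_mem_segment ℝ x y)
        (right_mem_segment ℝ x y) (continuous_norm.continuousOn)
      exact this ⟨hx, hy⟩
    have hd := dist_add_dist_of_mem_segment hz
    have h3 := hin x z hx hzR.le
    rw [hu_out z hzR.ge] at h3
    rw [hu_out y hy]
    have : dist x z ≤ dist x y := by linarith [dist_nonneg (x := z) (y := y)]
    exact h3.trans (by gcongr)
  have hLip : LipschitzWith K u := by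
    apply LipschitzWith.of_dist_le_mul
    intro x y
    rcases le_total ‖x‖ R with hx | hx <;> rcases le_total ‖y‖ R with hy | hy
    · exact hin x y hx hy
    · exact hmix x y hx hy
    · rw [dist_comm, dist_comm x y]; exact hmix y x hy hx
    · rw [hu_out x hx, hu_out y hy, dist_self]; positivity
  -- bijectivity
  have hbij : ∀ t : ℝ, 0 < t → t * K < 1 → Function.Bijective (fun x => x + t • u x) := by
    intro t ht htK
    have hc : ∀ p : E, ContractingWith (Real.toNNReal t * K) (fun x => p - t • u x) := by
      intro p
      refine ⟨?_, ?_⟩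
      · rw [← NNReal.coe_lt_coe]; simpa [ht.le] using htK
      · apply LipschitzWith.of_dist_le_mul
        intro x y
        rw [dist_sub_left, dist_smul₀, Real.norm_of_nonneg ht.le]
        have := hLip.dist_le_mul x y
        simp only [NNReal.coe_mul, Real.coe_toNNReal t ht.le]
        rw [mul_assoc]; gcongr
    constructor
    · intro x y hxy
      simp only at hxy
      have hx : Function.IsFixedPt (fun z => (x + t • u x) - t • u z) x := by
        simp [Function.IsFixedPt]
      have hy : Function.IsFixedPt (fun z => (x + t • u x) - t • u z) y := by
        simp [Function.IsFixedPt, hxy]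
      exact (hc _).fixedPoint_unique' hx hy
    · intro p
      have := (hc p).fixedPoint_isFixedPt
      simp only [Function.IsFixedPt] at this
      exact ⟨(hc p).fixedPoint, eq_sub_iff_add_eq.mp this.symm⟩
  have himage : ∀ t : ℝ, 0 < t → t * K < 1 →
      (fun x => x + t • u x) '' (Metric.ball 0 R) = Metric.ball (0:E) R := by
    intro t ht htK
    have hb := hbij t ht htK
    have hfix : ∀ x, R ≤ ‖x‖ → x + t • u x = x := fun x hx => by simp [hu_out x hx]
    ext p
    simp only [mem_image, mem_ball_zero_iff]
    constructor
    · rintro ⟨x, hx, rfl⟩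
      by_contra hcon
      push Not at hcon
      have := hb.1 (a₁ := x + t • u x) (a₂ := x) (hfix _ hcon)
      rw [this] at hcon
      linarith
    · intro hp
      obtain ⟨q, hq⟩ := hb.2 p
      refine ⟨q, ?_, hq⟩
      by_contra hcon
      push Not at hcon
      simp only [hfix q hcon] at hq
      rw [hq] at hcon; linarith
  let B : E → E →L[ℝ] E := fun x => fderiv ℝ r x - ContinuousLinearMap.id ℝ E
  have hBc : Continuous B := (hr.continuous_fderiv one_ne_zero).sub continuous_const
  let q : ℝ → E → ℝ := fun t x => (ContinuousLinearMap.id ℝ E + t • B x).det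
  have hqc : Continuous (fun z : ℝ × E => q z.1 z.2) := by
    apply ContinuousLinearMap.continuous_det.comp
    exact continuous_const.add (continuous_fst.smul (hBc.comp continuous_snd))
  have hpos : ∀ᶠ t in nhds (0:ℝ), ∀ x ∈ Metric.closedBall (0:E) R, 0 < q t x := by
    apply (isCompact_closedBall (0:E) R).eventually_forall_of_forall_eventually
    intro x _
    apply (hqc.tendsto (0, x)).eventually (lt_mem_nhds _)
    simp [q, ContinuousLinearMap.det]
  obtain ⟨δ, hδ, hδp⟩ := Metric.eventually_nhds_iff.mp hpos
  let μ : MeasureTheory.Measure E := MeasureTheory.volume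
  have hvol : ∀ t : ℝ, 0 < t → t * K < 1 → t < δ →
      ∫ x in Metric.ball (0:E) R, q t x ∂μ = ∫ x in Metric.ball (0:E) R, (1:ℝ) ∂μ := by
    intro t ht htK htδ
    have := MeasureTheory.integral_image_eq_integral_abs_det_fderiv_smul (F := ℝ) μ
      (s := Metric.ball (0:E) R) (f := fun x => x + t • u x)
      (f' := fun x => ContinuousLinearMap.id ℝ E + t • B x) measurableSet_ball (by
        intro x hx
        have h0 : HasFDerivAt (fun x => x + t • (r x - x)) (ContinuousLinearMap.id ℝ E + t • B x) x :=
          (hasFDerivAt_id x).add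
          ((((hr.differentiable one_ne_zero) x).hasFDerivAt.sub (hasFDerivAt_id x)).const_smul t)
        refine (h0.congr_of_eventuallyEq ?_).hasFDerivWithinAt
        filter_upwards [Metric.isOpen_ball.mem_nhds hx] with y hy
        rw [hu_in y (by simpa using (mem_ball_zero_iff.mp hy).le)]) ((hbij t ht htK).1.injOn) (fun _ => 1)
    rw [himage t ht htK] at this
    rw [this]
    apply MeasureTheory.setIntegral_congr_fun measurableSet_ball
    intro x hx
    have := hδp (y := t) (by simpa [abs_of_pos ht] using htδ) x (Metric.ball_subset_closedBall hx)
    simp only [smul_eq_mul, mul_one]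
    exact (abs_of_pos this).symm
  have hIntegr : ∀ t, MeasureTheory.IntegrableOn (q t) (Metric.ball (0:E) R) μ := by
    intro t
    have : Continuous (q t) := hqc.comp (continuous_const.prodMk continuous_id)
    exact (this.continuousOn.integrableOn_compact (isCompact_closedBall (0:E) R)).mono_set
      Metric.ball_subset_closedBall
  obtain ⟨ε, hε, hεK, hεδ⟩ : ∃ ε : ℝ, 0 < ε ∧ ε * K < 1 ∧ ε < δ := by
    refine ⟨min (δ/2) (1/(2*(K+1))), by positivity, ?_, ?_⟩
    · have : min (δ/2) (1/(2*((K:ℝ)+1))) * K ≤ 1/(2*(K+1)) * K := by gcongr; exact min_le_right _ _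
      refine this.trans_lt ?_
      have hk : (0:ℝ) ≤ K := K.2
      rw [div_mul_eq_mul_div, div_lt_one (by positivity)]; linarith
    · exact (min_le_left _ _).trans_lt (by linarith)
  obtain ⟨τ, c, hτ, hc, hpoly⟩ := br_lagrange n ε hε
  have hq1 : ∀ x, q 1 x = ∑ j, c j * q (τ j) x := by
    intro x
    let b := (EuclideanSpace.basisFun (Fin n) ℝ).toBasis
    obtain ⟨p, hp, hpe⟩ := br_poly (LinearMap.toMatrix b b (B x : E →ₗ[ℝ] E))
    have hqp : ∀ t, q t x = p.eval t := by
      intro t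
      rw [hpe]
      simp only [q, ContinuousLinearMap.det]
      rw [← LinearMap.det_toMatrix b]
      congr 1
      simp
    simp only [hqp]
    exact hpoly p hp
  have hI1 : ∫ x in Metric.ball (0:E) R, q 1 x ∂μ = ∫ x in Metric.ball (0:E) R, (1:ℝ) ∂μ := by
    simp only [hq1]
    rw [MeasureTheory.integral_finsetSum _ (fun j _ => (hIntegr (τ j)).const_mul (c j))]
    have : ∀ j, ∫ x in Metric.ball (0:E) R, c j * q (τ j) x ∂μ
        = c j * ∫ x in Metric.ball (0:E) R, (1:ℝ) ∂μ := by
      intro j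
      rw [MeasureTheory.integral_const_mul, hvol (τ j) (hτ j).1 _ ((hτ j).2.trans hεδ)]
      exact lt_of_le_of_lt (mul_le_mul_of_nonneg_right (hτ j).2.le K.2) hεK
    simp only [this]
    rw [← Finset.sum_mul, hc, one_mul]
  have hq0 : ∀ x, q 1 x = 0 := by
    intro x
    have hqx : q 1 x = (fderiv ℝ r x).det := by simp [q, B]
    rw [hqx]
    by_contra hne
    have hd := ((hr.differentiable one_ne_zero) x).hasFDerivAt
    have hn := hd.norm_sq
    have hconst : (fun y => ‖r y‖^2) = fun _ => R^2 := by ext y; rw [h1]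
    have h0 := hn.unique (by rw [hconst]; exact hasFDerivAt_const _ _)
    have hunit : IsUnit (LinearMap.det (fderiv ℝ r x : E →ₗ[ℝ] E)) := isUnit_iff_ne_zero.mpr hne
    obtain ⟨v, hv⟩ := ((LinearMap.equivOfDetNeZero _ hne).surjective (r x))
    have hv' : fderiv ℝ r x v = r x := hv
    have h4 := congrArg (fun T => T v) h0
    simp [hv', h1] at h4
    exact hR.ne' h4
  have hfin : ∫ x in Metric.ball (0:E) R, (1:ℝ) ∂μ = 0 := by
    rw [← hI1]; simp [hq0]
  simp only [MeasureTheory.integral_const, smul_eq_mul, mul_one, MeasureTheory.measureReal_restrict_apply_univ] at hfin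
  have hp : 0 < μ (Metric.ball (0:E) R) := Metric.measure_ball_pos _ _ hR
  rw [MeasureTheory.measureReal_eq_zero_iff (MeasureTheory.measure_ball_lt_top.ne)] at hfin
  exact hp.ne' hfin

theorem br_zero {n : ℕ} (R : ℝ) (f : EuclideanSpace ℝ (Fin n) → EuclideanSpace ℝ (Fin n))
    (hf : Continuous f) (hid : ∀ x, R ≤ ‖x‖ → f x = x) : ∃ x, f x = 0 := by
  by_contra hne
  push Not at hne
  let E := EuclideanSpace ℝ (Fin n)
  let R' : ℝ := |R| + 1
  have hR' : 0 < R' := by positivity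
  obtain ⟨g, hg, hgd, hgE, -⟩ := hf.exists_contDiff_approx_and_eqOn (ε := fun x => ‖f x‖) 1
    hf.norm (fun x => norm_pos_iff.mpr (hne x)) (S := {x : E | R' ≤ ‖x‖}) (U := {x : E | R < ‖x‖})
    (isClosed_le continuous_const continuous_norm)
    ((isOpen_lt continuous_const continuous_norm).mem_nhdsSet.mpr (by
      intro x hx
      have hx' : |R| + 1 ≤ ‖x‖ := hx
      change R < ‖x‖
      linarith [le_abs_self R]))
    (contDiffOn_id.congr (fun x hx => hid x (le_of_lt hx)))
  have hg0 : ∀ x, g x ≠ 0 := by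
    intro x hx
    have := hgd x
    rw [hx, dist_zero_left] at this
    exact lt_irrefl _ this
  have hg1 : ContDiff ℝ 1 g := by exact_mod_cast hg
  refine br_no_retraction R' hR' (fun x => (R' * ‖g x‖⁻¹) • g x) ?_ ?_ ?_
  · exact (contDiff_const.mul ((hg1.norm ℝ hg0).inv (fun x => norm_ne_zero_iff.mpr (hg0 x)))).smul hg1
  · intro x
    have := norm_ne_zero_iff.mpr (hg0 x)
    rw [norm_smul, norm_mul, norm_inv, norm_norm, Real.norm_of_nonneg hR'.le]
    field_simp
  · intro x hx
    have h5 : g x = x := by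
      rw [hgE (show x ∈ {x : E | R' ≤ ‖x‖} from hx.ge)]
      apply hid
      rw [hx]; simp only [R']; linarith [le_abs_self R]
    simp only [h5, hx]
    rw [mul_inv_cancel₀ hR'.ne', one_smul]

/-- Brouwer's fixed point theorem on a cube. -/
theorem br_brouwer {n : ℕ} (D : ℝ) (hD : 0 < D) (P : (Fin n → ℝ) → (Fin n → ℝ))
    (hP : ContinuousOn P (Metric.closedBall 0 D))
    (hmap : ∀ x, ‖x‖ ≤ D → ‖P x‖ ≤ D) : ∃ x, ‖x‖ ≤ D ∧ P x = x := by
  let clip : (Fin n → ℝ) → (Fin n → ℝ) := fun x i => max (-D) (min D (x i))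
  have hclip : Continuous clip := by fun_prop
  have hclipn : ∀ x, ‖clip x‖ ≤ D := by
    intro x
    rw [pi_norm_le_iff_of_nonneg hD.le]
    intro i
    rw [Real.norm_eq_abs, abs_le]
    exact ⟨le_max_left _ _, max_le (by linarith) (min_le_left _ _)⟩
  have hclipid : ∀ x, ‖x‖ ≤ D → clip x = x := by
    intro x hx
    ext i
    have := (norm_le_pi_norm x i).trans hx
    rw [Real.norm_eq_abs, abs_le] at this
    simp only [clip]
    rw [min_eq_right this.2, max_eq_right this.1]
  have hPc : Continuous (fun x => P (clip x)) :=
    hP.comp_continuous hclip (fun x => by simpa using hclipn x)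
  let χ : (Fin n → ℝ) → ℝ := fun x => max 0 (min 1 (2 - ‖x‖ / D))
  have hχ : Continuous χ := by fun_prop
  let f : (Fin n → ℝ) → (Fin n → ℝ) := fun x => x - χ x • P (clip x)
  have hfc : Continuous f := continuous_id.sub (hχ.smul hPc)
  let e := EuclideanSpace.equiv (Fin n) ℝ
  let c : ℝ := ‖(e.symm : (Fin n → ℝ) →L[ℝ] EuclideanSpace ℝ (Fin n))‖
  have hc0 : 0 ≤ c := norm_nonneg _
  obtain ⟨z, hz⟩ := br_zero ((c + 1) * (2 * D)) (fun z => e.symm (f (e z)))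
    (e.symm.continuous.comp (hfc.comp e.continuous)) (by
      intro z hz
      have h2D : 2 * D ≤ ‖e z‖ := by
        by_contra hcon
        push Not at hcon
        have h6 := (e.symm : (Fin n → ℝ) →L[ℝ] EuclideanSpace ℝ (Fin n)).le_opNorm (e z)
        simp only [ContinuousLinearEquiv.coe_coe, ContinuousLinearEquiv.symm_apply_apply] at h6
        have : c * ‖e z‖ ≤ c * (2 * D) := by gcongr
        change ‖z‖ ≤ c * ‖e z‖ at h6
        nlinarith
      have hχ0 : χ (e z) = 0 := by
        apply max_eq_left
        apply (min_le_right _ _).trans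
        rw [sub_nonpos, le_div_iff₀ hD]
        exact h2D
      simp [f, hχ0])
  have hz0 : f (e z) = 0 := by simpa using hz
  set x := e z
  have hx : x = χ x • P (clip x) := sub_eq_zero.mp hz0
  have hχ01 : 0 ≤ χ x ∧ χ x ≤ 1 := ⟨le_max_left _ _, max_le zero_le_one (min_le_left _ _)⟩
  have hxD : ‖x‖ ≤ D := by
    rw [hx, norm_smul, Real.norm_of_nonneg hχ01.1]
    have := hmap _ (hclipn x)
    nlinarith [norm_nonneg (P (clip x))]
  have hχ1 : χ x = 1 := by
    have : ‖x‖ / D ≤ 1 := (div_le_one hD).mpr hxD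
    simp only [χ]
    rw [min_eq_left (by linarith), max_eq_right zero_le_one]
  refine ⟨x, hxD, ?_⟩
  rw [hχ1, one_smul, hclipid x hxD] at hx
  exact hx.symm

theorem ode_periodic {n : ℕ} (g : ℝ → (Fin n → ℝ) → (Fin n → ℝ)) (K : NNReal) (η D q : ℝ)
    (hη : 0 ≤ η) (hD : 0 < D) (hq : 0 < q)
    (hLip : ∀ s ∈ Icc (0:ℝ) 1, LipschitzWith K (g s))
    (hcont : ∀ w, ContinuousOn (fun s => g s w) (Icc (0:ℝ) 1))
    (hbd : ∀ s ∈ Icc (0:ℝ) 1, ∀ w, ‖g s w‖ ≤ η)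
    (hηD : η ≤ D) (hqD : q * (D + η) ≤ D) :
    ∃ w : ℝ → (Fin n → ℝ),
      (∀ s ∈ Icc (0:ℝ) 1, HasDerivWithinAt w (g s (w s)) (Icc 0 1) s) ∧
      w 0 = q • w 1 ∧ ∀ s ∈ Icc (0:ℝ) 1, ‖w s‖ ≤ 2 * D := by
  have hPL : IsPicardLindelof g (⟨0, by simp⟩ : Icc (0:ℝ) 1) (0 : Fin n → ℝ)
      ⟨D + η, by positivity⟩ ⟨D, hD.le⟩ ⟨η, hη⟩ K :=
    { lipschitzOnWith := fun t ht => (hLip t ht).lipschitzOnWith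
      continuousOn := fun x _ => hcont x
      norm_le := fun t ht x _ => hbd t ht x
      mul_max_le := by
        change η * max (1 - 0) (0 - 0) ≤ (D + η) - D
        simp }
  obtain ⟨Φ, hΦ, L', hΦL⟩ := hPL.exists_forall_mem_closedBall_eq_hasDerivWithinAt_lipschitzOnWith
  have hΦ0 : ∀ x, ‖x‖ ≤ D → Φ x 0 = x := fun x hx => (hΦ x (mem_closedBall_zero_iff.mpr hx)).1
  have hΦd : ∀ x, ‖x‖ ≤ D → ∀ t ∈ Icc (0:ℝ) 1, HasDerivWithinAt (Φ x) (g t (Φ x t)) (Icc 0 1) t :=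
    fun x hx => (hΦ x (mem_closedBall_zero_iff.mpr hx)).2
  have hest : ∀ x, ‖x‖ ≤ D → ∀ t ∈ Icc (0:ℝ) 1, ‖Φ x t‖ ≤ D + η := by
    intro x hx t ht
    have h := (convex_Icc (0:ℝ) 1).norm_image_sub_le_of_norm_hasDerivWithin_le (hΦd x hx)
      (fun s hs => hbd s hs _) (show (0:ℝ) ∈ Icc (0:ℝ) 1 by simp) ht
    rw [hΦ0 x hx, sub_zero, Real.norm_of_nonneg ht.1] at h
    have h2 : ‖Φ x t‖ ≤ ‖Φ x t - x‖ + ‖x‖ := by simpa using norm_add_le (Φ x t - x) x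
    nlinarith [ht.2]
  obtain ⟨x, hx, hfix⟩ := br_brouwer D hD (fun x => q • Φ x 1)
    ((hΦL 1 (by simp)).continuousOn.const_smul q) (by
      intro x hx
      rw [norm_smul, Real.norm_of_nonneg hq.le]
      have := hest x hx 1 (by simp)
      nlinarith)
  refine ⟨Φ x, hΦd x hx, ?_, ?_⟩
  · rw [hΦ0 x hx]; exact hfix.symm
  · intro s hs
    have := hest x hx s hs
    linarith

theorem ode_reparam {n : ℕ} (U : (Fin n → ℝ) → (Fin n → ℝ)) (hU : Continuous U)
    (hUp : ∀ Y, U (fun i => Y i + 1) = U Y)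
    (X : ℝ → (Fin n → ℝ)) (ρ : ℝ → ℝ) (hρc : ContinuousOn ρ (Icc 0 1))
    (m M : ℝ) (hm : 0 < m)
    (hρm : ∀ s ∈ Icc (0:ℝ) 1, m ≤ ρ s) (hρM : ∀ s ∈ Icc (0:ℝ) 1, ρ s ≤ M) (hρ01 : ρ 0 = ρ 1)
    (hX : ∀ s ∈ Icc (0:ℝ) 1, HasDerivWithinAt X ((ρ s)⁻¹ • U (X s)) (Icc 0 1) s)
    (hX1 : X 1 = fun i => X 0 i + 1) (t₀ : ℝ) :
    ∃ (Z : ℝ → (Fin n → ℝ)) (θ : ℝ), M⁻¹ ≤ θ ∧ θ ≤ m⁻¹ ∧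
      (∀ t, HasDerivAt Z (U (Z t)) t) ∧ Z (t₀ + θ) = fun i => Z t₀ i + 1 := by
  have hXc : ContinuousOn X (Icc 0 1) := fun s hs => (hX s hs).continuousWithinAt
  have hM : 0 < M := hm.trans_le ((hρm 0 (by simp)).trans (hρM 0 (by simp)))
  have hfr : ∀ s : ℝ, Int.fract s ∈ Icc (0:ℝ) 1 :=
    fun s => ⟨Int.fract_nonneg s, (Int.fract_lt_one s).le⟩
  -- periodic extensions
  let κ : ℝ → ℝ := fun s => (ρ (Int.fract s))⁻¹
  let u : ℝ → (Fin n → ℝ) := fun s => U (X (Int.fract s))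
  have hκc : Continuous κ := by
    have := ContinuousOn.comp_fract'' (f := fun s => (ρ s)⁻¹) (hρc.inv₀ (fun s hs => (hm.trans_le (hρm s hs)).ne'))
      (by rw [hρ01])
    exact this
  have huc : Continuous u := by
    have := ContinuousOn.comp_fract'' (f := fun s => U (X s)) (hU.comp_continuousOn hXc)
      (by rw [hX1, hUp])
    exact this
  have hκm : ∀ s, M⁻¹ ≤ κ s := fun s => inv_anti₀ (hm.trans_le (hρm _ (hfr s))) (hρM _ (hfr s))
  have hκM : ∀ s, κ s ≤ m⁻¹ := fun s => inv_anti₀ hm (hρm _ (hfr s))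
  have hκpos : ∀ s, 0 < κ s := fun s => (inv_pos.mpr hM).trans_le (hκm s)
  have hκp : Function.Periodic κ 1 := fun s => by simp [κ]
  have hup : Function.Periodic u 1 := fun s => by simp [u]
  let T : ℝ → ℝ := fun s => ∫ σ in (0:ℝ)..s, κ σ
  have hTd : ∀ s, HasDerivAt T (κ s) s := fun s => hκc.integral_hasStrictDerivAt 0 s |>.hasDerivAt
  have hκu : Continuous (fun s => κ s • u s) := hκc.smul huc
  let W : ℝ → (Fin n → ℝ) := fun s => X 0 + ∫ σ in (0:ℝ)..s, κ σ • u σ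
  have hWd : ∀ s, HasDerivAt W (κ s • u s) s := fun s =>
    (hκu.integral_hasStrictDerivAt 0 s |>.hasDerivAt).const_add (X 0)
  have hW0 : W 0 = X 0 := by simp [W]
  have hT0 : T 0 = 0 := by simp [T]
  -- W = X on [0,1]
  have hWX : ∀ s ∈ Icc (0:ℝ) 1, W s = X s := by
    have hd : ∀ s ∈ Ico (0:ℝ) 1, HasDerivWithinAt X (κ s • u s) (Ici s) s := by
      intro s hs
      have h := (hX s ⟨hs.1, hs.2.le⟩).mono_of_mem_nhdsWithin (Icc_mem_nhdsGE_of_mem hs)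
      have hfs : Int.fract s = s := Int.fract_eq_self.mpr hs
      simpa [κ, u, hfs] using h
    exact eq_of_has_deriv_right_eq (f' := fun s => κ s • u s)
      (fun s _ => (hWd s).hasDerivWithinAt) hd
      (fun s _ => (hWd s).continuousAt.continuousWithinAt) hXc hW0
  have hTp : ∀ s, T (s + 1) = T s + T 1 := by
    intro s
    simp only [T]
    have h1 := hκp.intervalIntegral_add_eq s 0
    rw [zero_add] at h1
    rw [← h1, intervalIntegral.integral_add_adjacent_intervals] <;>
      exact hκc.intervalIntegrable _ _
  have hWp : ∀ s, W (s + 1) = fun i => W s i + 1 := by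
    intro s
    have h1 := (show Function.Periodic (fun s => κ s • u s) 1 from fun s => by
      simp only [hκp s, hup s]).intervalIntegral_add_eq s 0
    rw [zero_add] at h1
    have h2 : W (s+1) = W s + ∫ σ in (0:ℝ)..1, κ σ • u σ := by
      simp only [W]
      rw [← h1, add_assoc, intervalIntegral.integral_add_adjacent_intervals] <;>
      exact hκu.intervalIntegrable _ _
    have h3 : X 0 + ∫ σ in (0:ℝ)..1, κ σ • u σ = X 1 := hWX 1 (by simp)
    rw [h2]
    funext i
    have h4 := congrFun h3 i
    rw [hX1] at h4
    simp only [Pi.add_apply] at h4 ⊢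
    linarith
  have hUW : ∀ s, U (W s) = u s := by
    have hper : Function.Periodic (fun s => U (W s)) 1 := fun s => by
      simp only [hWp s, hUp]
    intro s
    have h1 : U (W (Int.fract s)) = U (W s) := by
      have := hper.sub_int_mul_eq (x := s) ⌊s⌋
      rw [mul_one, Int.self_sub_floor] at this
      exact this
    rw [← h1, hWX _ (hfr s)]
  -- inverse of T
  have hTmono : StrictMono T := strictMono_of_deriv_pos (fun s => by rw [(hTd s).deriv]; exact hκpos s)
  have hTc : Continuous T := continuous_iff_continuousAt.mpr fun s => (hTd s).continuousAt
  have hθ1 : M⁻¹ ≤ T 1 := by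
    have := intervalIntegral.integral_mono_on (μ := MeasureTheory.volume) (zero_le_one' ℝ) (continuous_const.intervalIntegrable 0 1)
      (hκc.intervalIntegrable 0 1) (fun s _ => hκm s)
    simpa [T] using this
  have hθ2 : T 1 ≤ m⁻¹ := by
    have := intervalIntegral.integral_mono_on (μ := MeasureTheory.volume) (zero_le_one' ℝ) (hκc.intervalIntegrable 0 1)
      (continuous_const.intervalIntegrable 0 1) (fun s _ => hκM s)
    simpa [T] using this
  have hlow : ∀ s, 0 ≤ s → M⁻¹ * s ≤ T s := by
    intro s hs
    have := intervalIntegral.integral_mono_on (μ := MeasureTheory.volume) hs (continuous_const.intervalIntegrable 0 s)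
      (hκc.intervalIntegrable 0 s) (fun s _ => hκm s)
    simpa [T, mul_comm] using this
  have hlow' : ∀ s, s ≤ 0 → T s ≤ M⁻¹ * s := by
    intro s hs
    have := intervalIntegral.integral_mono_on (μ := MeasureTheory.volume) hs (continuous_const.intervalIntegrable s 0)
      (hκc.intervalIntegrable s 0) (fun s _ => hκm s)
    have h5 : T s = -∫ x in s..0, κ x := intervalIntegral.integral_symm s 0
    simp at this
    linarith
  have hTsurj : Function.Surjective T := by
    have hMi : 0 < M⁻¹ := inv_pos.mpr hM
    refine hTc.surjective ?_ ?_
    · refine Filter.tendsto_atTop_mono' _ ?_ (Filter.tendsto_id.const_mul_atTop hMi)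
      filter_upwards [Filter.eventually_ge_atTop 0] with s hs using hlow s hs
    · refine Filter.tendsto_atBot_mono' _ ?_ (Filter.tendsto_id.const_mul_atBot hMi)
      filter_upwards [Filter.eventually_le_atBot 0] with s hs using hlow' s hs
  let iso := hTmono.orderIsoOfSurjective T hTsurj
  have hiso : ∀ s, iso s = T s := fun s => rfl
  let S : ℝ → ℝ := iso.symm
  have hST : ∀ s, S (T s) = s := fun s => iso.symm_apply_apply s
  have hTS : ∀ t, T (S t) = t := fun t => iso.apply_symm_apply t
  have hSc : Continuous S := iso.symm.continuous
  have hSd : ∀ t, HasDerivAt S (κ (S t))⁻¹ t := fun t =>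
    HasDerivAt.of_local_left_inverse hSc.continuousAt (hTd (S t)) (hκpos _).ne'
      (Filter.Eventually.of_forall hTS)
  refine ⟨fun t => W (S (t - t₀)), T 1, hθ1, hθ2, ?_, ?_⟩
  · intro t
    have h1 : HasDerivAt (fun t => S (t - t₀)) (κ (S (t - t₀)))⁻¹ t := by
      simpa using (hSd (t - t₀)).comp_sub_const t t₀
    have h2 := (hWd (S (t - t₀))).scomp t h1
    rw [smul_smul, inv_mul_cancel₀ (hκpos _).ne', one_smul] at h2
    rw [hUW]
    exact h2
  · have hS0 : S 0 = 0 := by rw [← hT0]; exact (hST 0).trans hT0.symm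
    have hS1 : S (T 1) = 1 := hST 1
    simp only [add_sub_cancel_left, sub_self]
    rw [hS0, hS1]
    simpa using hWp 0

theorem pf_H_bound {N : ℕ} (H : (Fin N → ℝ) → Fin N → ℝ) (hH : Continuous H)
    (hp : ∀ Y : Fin N → ℝ, H (fun i => Y i + 1) = H Y) (r : ℝ) (hr : normB_vec H < r)
    (Y : Fin N → ℝ) (hY : memB' Y) (i : Fin N) : |H Y i| ≤ r := by
  have hbdd : BddAbove {x | ∃ Y, memB' Y ∧ ∃ i, x = |H Y i|} := by
    obtain ⟨C, hC⟩ := (isCompact_closedBall (0 : Fin N → ℝ) 2).exists_bound_of_continuousOn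
      hH.continuousOn
    refine ⟨C, ?_⟩
    rintro x ⟨Z, hZ, j, rfl⟩
    have hper : Function.Periodic (fun c : ℝ => H (fun k => Z k + c)) 1 := by
      intro c
      have := hp (fun k => Z k + c)
      simp only [add_assoc] at this
      exact this
    have h1 : H (fun k => Z k - ⌊Z j⌋) = H Z := by
      have h2 := hper.sub_int_mul_eq (x := 0) ⌊Z j⌋
      simpa [sub_eq_add_neg] using h2
    have h3 := hC (fun k => Z k - ⌊Z j⌋) (by
      rw [mem_closedBall_zero_iff, pi_norm_le_iff_of_nonneg (by norm_num)]
      intro k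
      have h4 := abs_le.mp (hZ k j)
      have h5 := Int.floor_le (Z j)
      have h6 := Int.lt_floor_add_one (Z j)
      rw [Real.norm_eq_abs, abs_le]
      constructor <;> linarith)
    rw [h1] at h3
    exact (norm_le_pi_norm (H Z) j).trans h3
  exact (le_csSup hbdd ⟨Y, hY, i, rfl⟩).trans hr.le

theorem pf_pderZ_cont {N : ℕ} (F : (Fin N → ℝ) → ℝ → ℝ)
    (hF : ContDiff ℝ 2 (fun p : (Fin N → ℝ) × ℝ => F p.1 p.2)) :
    Continuous (fun p : (Fin N → ℝ) × ℝ => pderZ F p.1 p.2) ∧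
    ∀ Y z, HasDerivAt (fun u => F Y u) (pderZ F Y z) z := by
  have hd : ∀ Y z, HasDerivAt (fun u => F Y u)
      (fderiv ℝ (fun p : (Fin N → ℝ) × ℝ => F p.1 p.2) (Y, z) (0, 1)) z := by
    intro Y z
    have h1 := ((hF.differentiable two_ne_zero) (Y, z)).hasFDerivAt
    have h2 : HasDerivAt (fun u : ℝ => (Y, u)) ((0 : Fin N → ℝ), (1:ℝ)) z :=
      (hasDerivAt_const z Y).prodMk (hasDerivAt_id z)
    exact h1.comp_hasDerivAt z h2
  have he : ∀ Y z, pderZ F Y z = fderiv ℝ (fun p : (Fin N → ℝ) × ℝ => F p.1 p.2) (Y, z) (0, 1) :=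
    fun Y z => (hd Y z).deriv
  constructor
  · simp only [he]
    exact (hF.continuous_fderiv two_ne_zero).clm_apply continuous_const
  · intro Y z; rw [he]; exact hd Y z

theorem pf_diag_ge {N : ℕ} (F : (Fin N → ℝ) → ℝ → ℝ)
    (hF : Continuous (fun p : (Fin N → ℝ) × ℝ => F p.1 p.2))
    (hp : ∀ (Y : Fin N → ℝ) (z : ℝ), F (fun i => Y i + 1) (z + 1) = F Y z) (s : ℝ) :
    alphaConst F ≤ F (fun _ => s) s := by
  have hper : Function.Periodic (fun s : ℝ => F (fun _ => s) s) 1 := fun s => hp (fun _ => s) s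
  have h1 : F (fun _ => Int.fract s) (Int.fract s) = F (fun _ => s) s := by
    have := hper.sub_int_mul_eq (x := s) ⌊s⌋
    rw [mul_one, Int.self_sub_floor] at this
    exact this
  rw [← h1]
  have hc : Continuous (fun s : ℝ => F (fun _ => s) s) :=
    hF.comp ((continuous_pi fun _ => continuous_id).prodMk continuous_id)
  exact csInf_le (isCompact_Icc.image hc).bddBelow
    ⟨Int.fract s, ⟨Int.fract_nonneg s, (Int.fract_lt_one s).le⟩, rfl⟩

theorem pf_L_gt {N : ℕ} (F : (Fin N → ℝ) → ℝ → ℝ) (hF : HypH F) (hFs : HypHstar F) :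
    0 < normB F ∧ normB F < Lconst F := by
  obtain ⟨hC, hb0, hb1, hb2, hp, hα⟩ := hF
  have hdiag : ∀ s : ℝ, memB (N := N) (fun _ => s) s := fun s => by simp [memB]
  have h0 : alphaConst F ≤ normB F :=
    ((pf_diag_ge F hC.continuous hp 0).trans (le_abs_self _)).trans
      (le_csSup hb0 ⟨_, _, hdiag 0, rfl⟩)
  have h1 : 0 < normB_d F := by
    by_contra hcon
    push Not at hcon
    have hz : ∀ s : ℝ, pderZ F (fun _ => s) s = 0 := by
      intro s
      have := (le_csSup hb1 ⟨_, _, hdiag s, Or.inl rfl⟩).trans hcon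
      exact abs_eq_zero.mp (le_antisymm this (abs_nonneg _))
    simp [HypHstar, hz] at hFs
  have h2 : 0 ≤ normB_d2 F := by
    apply Real.sSup_nonneg
    rintro x ⟨Y, z, -, h | ⟨j, h⟩ | ⟨j, h⟩ | ⟨j, k, h⟩⟩ <;> rw [h] <;> exact abs_nonneg _
  refine ⟨hα.trans_le h0, ?_⟩
  unfold Lconst
  linarith

/-- Uniform closeness to the linearization near the diagonal. -/
theorem pf_tube {N : ℕ} (F : (Fin N → ℝ) → ℝ → ℝ)
    (hC : ContDiff ℝ 2 (fun p : (Fin N → ℝ) × ℝ => F p.1 p.2)) (α : ℝ) (hα : 0 < α)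
    (hdiag : ∀ s : ℝ, α ≤ F (fun _ => s) s) (a : ℝ → ℝ) (hac : Continuous a)
    (ha : ∀ s, a s = pderZ F (fun _ => s) s / F (fun _ => s) s) (ε : ℝ) (hε : 0 < ε) :
    ∃ δ : ℝ, 0 < δ ∧ δ ≤ 1 / 2 ∧ ∀ s ∈ Icc (0:ℝ) 1, ∀ y : Fin N → ℝ, ‖y‖ ≤ δ →
      2 * α / 3 ≤ F (fun j => s + y j) s ∧
      ∀ i, |(F (fun j => s + y j) (s + y i) - F (fun j => s + y j) s) / F (fun j => s + y j) s
        - a s * y i| ≤ ε * δ := by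
  obtain ⟨hZc, hZd⟩ := pf_pderZ_cont F hC
  have hFc := hC.continuous
  let Q : ((Fin N → ℝ) × ℝ) × ℝ → ℝ := fun p =>
    pderZ F (fun j => p.2 + p.1.1 j) (p.2 + p.1.2) - a p.2 * F (fun j => p.2 + p.1.1 j) p.2
  have hF1 : Continuous (fun p : ((Fin N → ℝ) × ℝ) × ℝ => F (fun j => p.2 + p.1.1 j) p.2) :=
    hFc.comp (f := fun p : ((Fin N → ℝ) × ℝ) × ℝ => ((fun j => p.2 + p.1.1 j : Fin N → ℝ), p.2)) (by fun_prop)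
  have hQc : Continuous Q := by
    refine Continuous.sub ?_ ((hac.comp continuous_snd).mul hF1)
    exact hZc.comp (f := fun p : ((Fin N → ℝ) × ℝ) × ℝ =>
      ((fun j => p.2 + p.1.1 j : Fin N → ℝ), p.2 + p.1.2)) (by fun_prop)
  have hε' : 0 < ε * (2 * α / 3) := by positivity
  have hev : ∀ᶠ p in nhds (0 : (Fin N → ℝ) × ℝ), ∀ s ∈ Icc (0:ℝ) 1,
      2 * α / 3 < F (fun j => s + p.1 j) s ∧ |Q (p, s)| < ε * (2 * α / 3) := by
    apply isCompact_Icc.eventually_forall_of_forall_eventually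
    intro s _
    refine Filter.Eventually.and ?_ ?_
    · apply (hF1.tendsto (0, s)).eventually (lt_mem_nhds _)
      have := hdiag s
      simp only [Prod.fst_zero, Pi.zero_apply, add_zero]
      linarith
    · apply (hQc.abs.tendsto (0, s)).eventually (gt_mem_nhds _)
      have h0 : Q (0, s) = 0 := by
        have : F (fun _ => s) s ≠ 0 := (hα.trans_le (hdiag s)).ne'
        simp only [Q, Prod.fst_zero, Prod.snd_zero, Pi.zero_apply, add_zero, ha]
        field_simp
        ring
      simpa [h0] using hε'
  obtain ⟨δ₀, hδ₀, hball⟩ := Metric.eventually_nhds_iff.mp hev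
  have hδ : 0 < min (δ₀ / 2) (1/2) := by positivity
  refine ⟨min (δ₀ / 2) (1/2), hδ, min_le_right _ _, ?_⟩
  set δ := min (δ₀ / 2) (1/2) with hδdef
  have hδlt : δ < δ₀ := (min_le_left _ _).trans_lt (by linarith)
  intro s hs y hy
  have key : ∀ ζ : ℝ, |ζ| ≤ δ → 2 * α / 3 < F (fun j => s + y j) s ∧
      |Q ((y, ζ), s)| < ε * (2 * α / 3) := by
    intro ζ hζ
    refine hball (y := (y, ζ)) ?_ s hs
    rw [dist_zero_right, Prod.norm_def]
    exact max_lt (hy.trans_lt hδlt) (lt_of_le_of_lt hζ hδlt)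
  have hlow := (key 0 (by simpa using hδ.le)).1
  refine ⟨hlow.le, fun i => ?_⟩
  have hpos : 0 < F (fun j => s + y j) s := lt_trans (by positivity) hlow
  have hyi : |y i| ≤ δ := (norm_le_pi_norm y i).trans hy
  set G := F (fun j => s + y j) s with hG
  have hder : ∀ ζ ∈ Icc (-δ) δ, HasDerivWithinAt
      (fun ζ => F (fun j => s + y j) (s + ζ) - a s * G * ζ) (Q ((y, ζ), s)) (Icc (-δ) δ) ζ := by
    intro ζ _
    have h1 := (hZd (fun j => s + y j) (s + ζ)).comp_const_add s ζ
    have h2 := (hasDerivAt_id ζ).const_mul (a s * G)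
    have h3 := h1.sub h2
    simp only [mul_one] at h3
    exact h3.hasDerivWithinAt
  have hmv := (convex_Icc (-δ) δ).norm_image_sub_le_of_norm_hasDerivWithin_le hder
    (fun ζ hζ => (key ζ (abs_le.mpr hζ)).2.le) (show (0:ℝ) ∈ Icc (-δ) δ from ⟨by linarith, hδ.le⟩)
    (abs_le.mp hyi)
  simp only [add_zero, mul_zero, sub_zero, Real.norm_eq_abs] at hmv
  rw [← hG] at hmv
  have heq : (F (fun j => s + y j) (s + y i) - G) / G - a s * y i
      = (F (fun j => s + y j) (s + y i) - a s * G * y i - G) / G := by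
    field_simp
    ring
  rw [heq, abs_div, abs_of_pos hpos, div_le_iff₀ hpos]
  calc _ ≤ ε * (2 * α / 3) * |y i| := hmv
    _ ≤ ε * G * δ := by gcongr
    _ = ε * δ * G := by ring

/-- The reduced vector field `V(s,y)`, Lipschitz in `y` near the diagonal. -/
theorem pf_V_lip {N : ℕ} (F : (Fin N → ℝ) → ℝ → ℝ)
    (hC : ContDiff ℝ 2 (fun p : (Fin N → ℝ) × ℝ => F p.1 p.2))
    (H : (Fin N → ℝ) → Fin N → ℝ) (hH : ContDiff ℝ 1 H) (δ : ℝ)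
    (hne : ∀ s ∈ Icc (0:ℝ) 1, ∀ y : Fin N → ℝ, ‖y‖ ≤ δ → F (fun j => s + y j) s ≠ 0) :
    ∃ K, LipschitzOnWith K (fun p : ℝ × (Fin N → ℝ) => (fun i =>
      (F (fun j => p.1 + p.2 j) (p.1 + p.2 i) + H (fun j => p.1 + p.2 j) i) /
        F (fun j => p.1 + p.2 j) p.1 : Fin N → ℝ)) (Icc (0:ℝ) 1 ×ˢ Metric.closedBall 0 δ) := by
  have hC1 : ContDiff ℝ 1 (fun p : (Fin N → ℝ) × ℝ => F p.1 p.2) := hC.of_le one_le_two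
  have hsh : ContDiff ℝ 1 (fun p : ℝ × (Fin N → ℝ) => (fun j => p.1 + p.2 j : Fin N → ℝ)) := by
    fun_prop
  refine ContDiffOn.exists_lipschitzOnWith (n := 1) ?_ one_ne_zero
    ((convex_Icc _ _).prod (convex_closedBall _ _)) (isCompact_Icc.prod (isCompact_closedBall _ _))
  rw [contDiffOn_pi]
  intro i
  refine ContDiffOn.div (ContDiff.contDiffOn ?_) (ContDiff.contDiffOn ?_) ?_
  · refine ContDiff.add ?_ ?_
    · exact hC1.comp (f := fun p : ℝ × (Fin N → ℝ) =>
        ((fun j => p.1 + p.2 j : Fin N → ℝ), p.1 + p.2 i)) (hsh.prodMk (by fun_prop))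
    · exact (contDiff_pi.mp hH i).comp hsh
  · exact hC1.comp (f := fun p : ℝ × (Fin N → ℝ) =>
        ((fun j => p.1 + p.2 j : Fin N → ℝ), p.1)) (hsh.prodMk contDiff_fst)
  · rintro ⟨s, y⟩ ⟨hs, hy⟩
    exact hne s hs y (by simpa using hy)

/-- Existence of a periodic profile `y`. -/
theorem pf_profile {N : ℕ} (V : ℝ → (Fin N → ℝ) → (Fin N → ℝ)) (a A : ℝ → ℝ)
    (hac : Continuous a) (hA : ∀ s, HasDerivAt A (a s) s) (hA0 : A 0 = 0)
    (C κ δ : ℝ) (hκ : 0 < κ) (hκ1 : κ ≤ 1) (hδ : 0 < δ) (hC : 0 < C)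
    (hC1 : ∀ s ∈ Icc (0:ℝ) 1, exp (A s) ≤ C) (hC2 : ∀ s ∈ Icc (0:ℝ) 1, exp (-A s) ≤ C)
    (hκA : exp (A 1) * (1 + κ) ≤ 1)
    (K : NNReal) (hV : LipschitzOnWith K (fun p : ℝ × (Fin N → ℝ) => V p.1 p.2)
      (Icc (0:ℝ) 1 ×ˢ Metric.closedBall 0 δ))
    (hVb : ∀ s ∈ Icc (0:ℝ) 1, ∀ y : Fin N → ℝ, ‖y‖ ≤ δ →
      ∀ i, |V s y i - 1 - a s * y i| ≤ κ * δ / (2 * C ^ 2)) :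
    ∃ y : ℝ → (Fin N → ℝ), y 0 = y 1 ∧ (∀ s ∈ Icc (0:ℝ) 1, ‖y s‖ ≤ δ) ∧
      ∀ s ∈ Icc (0:ℝ) 1, HasDerivWithinAt y (V s (y s) - 1) (Icc 0 1) s := by
  have hAc : Continuous A := continuous_iff_continuousAt.mpr fun s => (hA s).continuousAt
  let D : ℝ := δ / (2 * C)
  have hD : 0 < D := by positivity
  have hDδ : C * (2 * D) = δ := by simp only [D]; field_simp
  let clip : (Fin N → ℝ) → (Fin N → ℝ) := fun x i => max (-(2*D)) (min (2*D) (x i))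
  have hclipn : ∀ x, ‖clip x‖ ≤ 2 * D := by
    intro x
    rw [pi_norm_le_iff_of_nonneg (by positivity)]
    intro i
    rw [Real.norm_eq_abs, abs_le]
    exact ⟨le_max_left _ _, max_le (by linarith) (min_le_left _ _)⟩
  have hclipid : ∀ x, ‖x‖ ≤ 2 * D → clip x = x := by
    intro x hx
    ext i
    have := (norm_le_pi_norm x i).trans hx
    rw [Real.norm_eq_abs, abs_le] at this
    simp only [clip]
    rw [min_eq_right this.2, max_eq_right this.1]
  have hclipL : ∀ x x', ‖clip x - clip x'‖ ≤ ‖x - x'‖ := by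
    intro x x'
    rw [pi_norm_le_iff_of_nonneg (norm_nonneg _)]
    intro i
    refine le_trans ?_ (norm_le_pi_norm (x - x') i)
    simp only [Pi.sub_apply, clip, Real.norm_eq_abs]
    refine (abs_max_sub_max_le_max _ _ _ _).trans ?_
    rw [sub_self, abs_zero, max_eq_right (abs_nonneg _)]
    refine (abs_min_sub_min_le_max _ _ _ _).trans ?_
    rw [sub_self, abs_zero, max_eq_right (abs_nonneg _)]
  have hyn : ∀ s ∈ Icc (0:ℝ) 1, ∀ w : Fin N → ℝ, ‖w‖ ≤ 2 * D → ‖exp (A s) • w‖ ≤ δ := by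
    intro s hs w hw
    rw [norm_smul, Real.norm_of_nonneg (exp_pos _).le, ← hDδ]
    exact mul_le_mul (hC1 s hs) hw (norm_nonneg _) hC.le
  let g : ℝ → (Fin N → ℝ) → (Fin N → ℝ) := fun s w =>
    exp (-A s) • (V s (exp (A s) • clip w) - 1) - a s • clip w
  obtain ⟨Ca, hCa⟩ := (isCompact_Icc (a := (0:ℝ)) (b := 1)).exists_bound_of_continuousOn
    hac.continuousOn
  have hCa0 : 0 ≤ Ca := (norm_nonneg _).trans (hCa 0 (by simp))
  have hLip : ∀ s ∈ Icc (0:ℝ) 1, LipschitzWith (Real.toNNReal (C * (K * C) + Ca)) (g s) := by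
    intro s hs
    apply LipschitzWith.of_dist_le_mul
    intro w w'
    rw [Real.coe_toNNReal _ (by positivity), dist_eq_norm, dist_eq_norm]
    have h1 : g s w - g s w' = exp (-A s) • (V s (exp (A s) • clip w) - V s (exp (A s) • clip w'))
        - a s • (clip w - clip w') := by
      simp only [g, smul_sub]; abel
    have h2 : ‖V s (exp (A s) • clip w) - V s (exp (A s) • clip w')‖ ≤ K * (C * ‖w - w'‖) := by
      have h3 := hV.dist_le_mul (s, exp (A s) • clip w)
        ⟨hs, mem_closedBall_zero_iff.mpr (hyn s hs _ (hclipn w))⟩ (s, exp (A s) • clip w')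
        ⟨hs, mem_closedBall_zero_iff.mpr (hyn s hs _ (hclipn w'))⟩
      rw [dist_eq_norm] at h3
      refine h3.trans ?_
      rw [Prod.dist_eq]
      simp only [dist_self]
      rw [max_eq_right dist_nonneg, dist_eq_norm, ← smul_sub, norm_smul,
        Real.norm_of_nonneg (exp_pos _).le]
      gcongr
      · exact hC1 s hs
      · exact hclipL w w'
    rw [h1]
    refine (norm_sub_le _ _).trans ?_
    rw [norm_smul, norm_smul, Real.norm_of_nonneg (exp_pos _).le]
    calc _ ≤ C * (K * (C * ‖w - w'‖)) + Ca * ‖w - w'‖ := by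
          gcongr
          · exact hC2 s hs
          · exact hCa s hs
          · exact hclipL w w'
      _ = _ := by ring
  have hcont : ∀ w, ContinuousOn (fun s => g s w) (Icc (0:ℝ) 1) := by
    intro w
    have h1 : ContinuousOn (fun s => exp (-A s)) (Icc (0:ℝ) 1) :=
      (by fun_prop : Continuous fun s => exp (-A s)).continuousOn
    have h2 : ContinuousOn (fun s => a s • clip w) (Icc (0:ℝ) 1) :=
      Continuous.continuousOn (by fun_prop)
    have h3 : ContinuousOn (fun s => V s (exp (A s) • clip w)) (Icc (0:ℝ) 1) := by
      refine hV.continuousOn.comp (f := fun s => (s, exp (A s) • clip w))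
        (Continuous.continuousOn (by fun_prop)) ?_
      intro s hs
      exact ⟨hs, mem_closedBall_zero_iff.mpr (hyn s hs _ (hclipn w))⟩
    exact (h1.smul (h3.sub continuousOn_const)).sub h2
  have hbd : ∀ s ∈ Icc (0:ℝ) 1, ∀ w, ‖g s w‖ ≤ κ * D := by
    intro s hs w
    rw [pi_norm_le_iff_of_nonneg (by positivity)]
    intro i
    have h1 : g s w i = exp (-A s) * (V s (exp (A s) • clip w) i - 1
        - a s * (exp (A s) • clip w) i) := by
      have h2 : exp (-A s) * exp (A s) = 1 := by rw [← exp_add]; simp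
      simp only [g, Pi.sub_apply, Pi.smul_apply, Pi.one_apply, smul_eq_mul]
      linear_combination a s * clip w i * h2
    rw [h1, norm_mul, Real.norm_of_nonneg (exp_pos _).le, Real.norm_eq_abs]
    calc _ ≤ C * (κ * δ / (2 * C ^ 2)) := by
          gcongr
          · exact hC2 s hs
          · exact hVb s hs _ (hyn s hs _ (hclipn w)) i
      _ = κ * D := by simp only [D]; field_simp
  obtain ⟨w, hw, hw01, hwn⟩ := ode_periodic g _ (κ * D) D (exp (A 1)) (by positivity) hD (exp_pos _)
    hLip hcont hbd (by nlinarith) (by nlinarith)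
  refine ⟨fun s => exp (A s) • w s, ?_, fun s hs => hyn s hs _ (hwn s hs), ?_⟩
  · simp only [hA0, exp_zero, one_smul]; exact hw01
  · intro s hs
    have h1 := ((hA s).exp.hasDerivWithinAt (s := Icc (0:ℝ) 1)).smul (hw s hs)
    refine h1.congr_deriv ?_
    have h2 : exp (A s) * exp (-A s) = 1 := by rw [← exp_add]; simp
    simp only [g, hclipid _ (hwn s hs)]
    rw [smul_sub, smul_smul, h2, one_smul, smul_smul]
    rw [sub_add_cancel]

/-- **fixed point of the Poincaré map.** Under `(H)` and `(H*)`,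
with `L = ‖F‖_B + ‖dF‖_B + ‖d²F‖_B` and `α = min_{s∈[0,1]} F(s𝟙,s)`, there is
`D* > 0` such that for every `D ∈ (0, D*]` there is `𝓇 > 0` such that for every
`C¹`, `𝟙`-periodic perturbation `H` with `‖H‖_B < 𝓇` there are `X* ∈ ℝᴺ` and
`θ* ∈ (1/L, 2/α)` such that the solution starting at `X*` at time `t₀` is defined
for all `t ≥ t₀` and satisfies `X(t₀ + θ*) = X* + 𝟙`. -/
theorem poincare_fixed_point
    (N : ℕ) (hN : 2 ≤ N)
    (F : (Fin N → ℝ) → ℝ → ℝ) (hF : HypH F) (hFstar : HypHstar F)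
    (t₀ : ℝ) :
    ∃ Dstar : ℝ, 0 < Dstar ∧
      ∀ D ∈ Set.Ioc (0:ℝ) Dstar,
        ∃ r : ℝ, 0 < r ∧
          ∀ H : (Fin N → ℝ) → Fin N → ℝ,
            ContDiff ℝ 1 (fun Y => H Y) →
            (∀ Y : Fin N → ℝ, H (fun i => Y i + 1) = H Y) →
            normB_vec H < r →
            ∃ Xstar : Fin N → ℝ, ∃ θstar : ℝ,
              θstar ∈ Set.Ioo (1 / Lconst F) (2 / alphaConst F) ∧
              ∃ X : ℝ → Fin N → ℝ,
                X t₀ = Xstar ∧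
                (∀ t : ℝ, t₀ ≤ t → ∀ i,
                  HasDerivAt (fun τ => X τ i) (F (X t) (X t i) + H (X t) i) t) ∧
                X (t₀ + θstar) = fun i => Xstar i + 1 := by
  have hLgt := pf_L_gt F hF hFstar
  obtain ⟨hC, hb0, hb1, hb2, hper, hα⟩ := hF
  have hdiag := pf_diag_ge F hC.continuous hper
  obtain ⟨hZc, hZd⟩ := pf_pderZ_cont F hC
  set α := alphaConst F with hαdef
  let a : ℝ → ℝ := fun s => pderZ F (fun _ => s) s / F (fun _ => s) s
  have hac : Continuous a := by
    refine Continuous.div ?_ ?_ (fun s => (hα.trans_le (hdiag s)).ne')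
    · exact hZc.comp (f := fun s : ℝ => ((fun _ => s : Fin N → ℝ), s)) (by fun_prop)
    · exact hC.continuous.comp (f := fun s : ℝ => ((fun _ => s : Fin N → ℝ), s)) (by fun_prop)
  let A : ℝ → ℝ := fun s => ∫ σ in (0:ℝ)..s, a σ
  have hA : ∀ s, HasDerivAt A (a s) s := fun s => hac.integral_hasStrictDerivAt 0 s |>.hasDerivAt
  have hA0 : A 0 = 0 := by simp [A]
  have hA1 : A 1 < 0 := hFstar
  have hAc : Continuous A := continuous_iff_continuousAt.mpr fun s => (hA s).continuousAt
  obtain ⟨CA, hCA⟩ := (isCompact_Icc (a := (0:ℝ)) (b := 1)).exists_bound_of_continuousOn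
    hAc.continuousOn
  let C : ℝ := exp CA
  have hCpos : 0 < C := exp_pos _
  have hC1 : ∀ s ∈ Icc (0:ℝ) 1, exp (A s) ≤ C := fun s hs =>
    exp_le_exp.mpr ((le_abs_self _).trans (hCA s hs))
  have hC2 : ∀ s ∈ Icc (0:ℝ) 1, exp (-A s) ≤ C := fun s hs =>
    exp_le_exp.mpr ((neg_le_abs _).trans (hCA s hs))
  obtain ⟨κ, hκ, hκ1, hκA⟩ : ∃ κ : ℝ, 0 < κ ∧ κ ≤ 1 ∧ exp (A 1) * (1 + κ) ≤ 1 := by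
    have hq : exp (A 1) < 1 := by
      have h := exp_lt_exp.mpr hA1
      rwa [exp_zero] at h
    have hq0 := exp_pos (A 1)
    refine ⟨1 - exp (A 1), by linarith, by linarith, ?_⟩
    nlinarith [sq_nonneg (1 - exp (A 1))]
  obtain ⟨δ, hδ, hδ2, htube⟩ := pf_tube F hC α hα hdiag a hac (fun s => rfl) (κ / (4 * C ^ 2))
    (by positivity)
  refine ⟨1, one_pos, fun D _ => ⟨κ * δ / (4 * C ^ 2) * (2 * α / 3), by positivity, ?_⟩⟩
  intro H hH hHp hHr
  have hmem : ∀ (s : ℝ) (y : Fin N → ℝ), ‖y‖ ≤ δ →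
      memB (fun j => s + y j) s ∧ memB' (fun j => s + y j) := by
    intro s y hy
    have h1 : ∀ i, |y i| ≤ 1 / 2 := fun i => ((norm_le_pi_norm y i).trans hy).trans hδ2
    have h2 : memB' (fun j => s + y j) := by
      intro i j
      have hi := abs_le.mp (h1 i)
      have hj := abs_le.mp (h1 j)
      rw [abs_le]; constructor <;> linarith
    refine ⟨⟨h2, fun i => ?_⟩, h2⟩
    have hi := abs_le.mp (h1 i)
    rw [abs_le]; constructor <;> linarith
  let V : ℝ → (Fin N → ℝ) → (Fin N → ℝ) := fun s y i =>
    (F (fun j => s + y j) (s + y i) + H (fun j => s + y j) i) / F (fun j => s + y j) s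
  have hpos : ∀ s ∈ Icc (0:ℝ) 1, ∀ y : Fin N → ℝ, ‖y‖ ≤ δ → 0 < F (fun j => s + y j) s :=
    fun s hs y hy => lt_of_lt_of_le (by positivity) (htube s hs y hy).1
  obtain ⟨K, hK⟩ := pf_V_lip F hC H hH δ (fun s hs y hy => (hpos s hs y hy).ne')
  have hVb : ∀ s ∈ Icc (0:ℝ) 1, ∀ y : Fin N → ℝ, ‖y‖ ≤ δ →
      ∀ i, |V s y i - 1 - a s * y i| ≤ κ * δ / (2 * C ^ 2) := by
    intro s hs y hy i
    obtain ⟨hlow, hlin⟩ := htube s hs y hy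
    have hp := hpos s hs y hy
    have hHb := pf_H_bound H hH.continuous hHp _ hHr _ (hmem s y hy).2 i
    have h1 : V s y i - 1 - a s * y i =
        ((F (fun j => s + y j) (s + y i) - F (fun j => s + y j) s) / F (fun j => s + y j) s
          - a s * y i) + H (fun j => s + y j) i / F (fun j => s + y j) s := by
      simp only [V]
      field_simp
      ring
    rw [h1]
    have h2 : |H (fun j => s + y j) i / F (fun j => s + y j) s| ≤ κ * δ / (4 * C ^ 2) := by
      rw [abs_div, abs_of_pos hp, div_le_iff₀ hp]
      refine hHb.trans ?_
      gcongr
    calc _ ≤ κ / (4 * C ^ 2) * δ + κ * δ / (4 * C ^ 2) :=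
          (abs_add_le _ _).trans (add_le_add (hlin i) h2)
      _ = _ := by field_simp; ring
  obtain ⟨y, hy01, hyn, hyd⟩ := pf_profile V a A hac hA hA0 C κ δ hκ hκ1 hδ hCpos hC1 hC2 hκA K hK hVb
  let X : ℝ → (Fin N → ℝ) := fun s j => s + y s j
  let U : (Fin N → ℝ) → (Fin N → ℝ) := fun Y i => F Y (Y i) + H Y i
  let ρ : ℝ → ℝ := fun s => F (X s) s
  have hX1 : X 1 = fun i => X 0 i + 1 := by
    funext i; simp only [X, hy01]; ring
  have hUc : Continuous U := by
    refine continuous_pi fun i => Continuous.add ?_ ((continuous_apply i).comp hH.continuous)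
    exact hC.continuous.comp (f := fun Y : Fin N → ℝ => (Y, Y i)) (by fun_prop)
  have hXd : ∀ s ∈ Icc (0:ℝ) 1, HasDerivWithinAt X ((ρ s)⁻¹ • U (X s)) (Icc 0 1) s := by
    intro s hs
    rw [hasDerivWithinAt_pi]
    intro i
    have h1 := (hasDerivWithinAt_pi.mp (hyd s hs)) i
    refine ((hasDerivWithinAt_id s _).add h1).congr_deriv ?_
    simp only [V, U, ρ, X, Pi.sub_apply, Pi.one_apply, Pi.smul_apply, smul_eq_mul]
    ring
  have hXc : ContinuousOn X (Icc 0 1) := fun s hs => (hXd s hs).continuousWithinAt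
  have hρc : ContinuousOn ρ (Icc 0 1) :=
    hC.continuous.comp_continuousOn (f := fun s => (X s, s)) (hXc.prodMk continuousOn_id)
  have hρ01 : ρ 0 = ρ 1 := by
    simp only [ρ]
    rw [hX1]
    have := hper (X 0) 0
    rw [zero_add] at this
    exact this.symm
  obtain ⟨Z, θ, hθ1, hθ2, hZ, hZθ⟩ := ode_reparam U hUc (by
      intro Y; funext i; simp only [U, hper, hHp]) X ρ hρc (2 * α / 3) (normB F) (by positivity)
    (fun s hs => (htube s hs (y s) (hyn s hs)).1)
    (fun s hs => (le_abs_self _).trans (le_csSup hb0 ⟨_, _, (hmem s (y s) (hyn s hs)).1, rfl⟩))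
    hρ01 hXd hX1 t₀
  refine ⟨Z t₀, θ, ⟨?_, ?_⟩, Z, rfl, ?_, hZθ⟩
  · refine lt_of_lt_of_le ?_ hθ1
    rw [one_div]
    exact inv_strictAnti₀ hLgt.1 hLgt.2
  · refine lt_of_le_of_lt hθ2 ?_
    rw [inv_lt_comm₀ (by positivity) (by positivity), inv_div]
    linarith
  · intro t _ i
    exact hasDerivAt_pi.mp (hZ t) i
end

section
/- (Main Result II) Let N ≥ 2 and let F : ℝᴺ × ℝ → ℝ satisfy hypotheses (H) and (H*). Then there exists D* > 0 such that for every D ∈ (0, D*] there exists 𝓇 > 0 with the following property: for every C¹, 𝟙-periodic function H : ℝᴺ → ℝᴺ with ‖H‖_B < 𝓇, there exist an initial condition X* ∈ ℝᴺ, a real number ρ > 0, and C¹ functions Ψ₁, …, Ψ_N : ℝ → ℝ, each periodic with period 1/ρ, such that the solution X = (x₁,…,x_N) of xᵢ' = F(X, xᵢ) + Hᵢ(X) with X(t₀) = X* is defined for all t ≥ t₀ and satisfies xᵢ(t) = ρ t + Ψᵢ(t) for every i = 1,…,N and all t ≥ t₀. -/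
open Real Set

open Metric MeasureTheory Topology in
/-- interpolation weights -/
lemma br_weights (n : ℕ) (t0 : ℝ) (ht0 : 0 < t0) :
    ∃ (v w : ℕ → ℝ), (∀ i ∈ Finset.range (n+1), 0 ≤ v i ∧ v i < t0) ∧
      ∀ p : Polynomial ℝ, p.natDegree ≤ n →
        p.eval 1 = ∑ i ∈ Finset.range (n+1), w i * p.eval (v i) := by
  set v : ℕ → ℝ := fun i => t0 * (i / (n+1)) with hv
  have hn : (0:ℝ) < n + 1 := by positivity
  have hinj : Set.InjOn v (Finset.range (n+1)) := by
    intro i _ j _ h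
    simp only [hv] at h
    have h1 := mul_left_cancel₀ ht0.ne' h
    field_simp at h1
    exact_mod_cast h1
  refine ⟨v, fun i => (Lagrange.basis (Finset.range (n+1)) v i).eval 1, ?_, ?_⟩
  · intro i hi
    have : (i:ℝ) < n + 1 := by exact_mod_cast Finset.mem_range.1 hi
    refine ⟨by simp only [hv]; positivity, ?_⟩
    simp only [hv]
    have : (i:ℝ)/(n+1) < 1 := by rw [div_lt_one hn]; exact this
    nlinarith
  · intro p hp
    have hd : p.degree < (Finset.range (n+1)).card := by
      rw [Finset.card_range]
      exact lt_of_le_of_lt Polynomial.degree_le_natDegree (by exact_mod_cast Nat.lt_succ_of_le hp)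
    have := Lagrange.eq_interpolate hinj hd
    conv_lhs => rw [this]
    rw [Lagrange.interpolate_apply, Polynomial.eval_finsetSum]
    refine Finset.sum_congr rfl fun i _ => ?_
    rw [Polynomial.eval_mul, Polynomial.eval_C, mul_comm]

lemma br_det_poly {E : Type*} [NormedAddCommGroup E] [NormedSpace ℝ E] [FiniteDimensional ℝ E]
    (A : E →L[ℝ] E) : ∃ p : Polynomial ℝ, p.natDegree ≤ Module.finrank ℝ E ∧
      ∀ t : ℝ, p.eval t = (ContinuousLinearMap.id ℝ E + t • A).det := by
  classical
  let b := Module.finBasis ℝ E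
  let M := LinearMap.toMatrix b b (A : E →ₗ[ℝ] E)
  refine ⟨Matrix.det ((Polynomial.X : Polynomial ℝ) • M.map Polynomial.C + (1 : Matrix _ _ ℝ).map Polynomial.C), ?_, ?_⟩
  · simpa using Polynomial.natDegree_det_X_add_C_le M 1
  · intro t
    have h1 : (ContinuousLinearMap.id ℝ E + t • A).det =
        Matrix.det (1 + t • M) := by
      rw [ContinuousLinearMap.det, ← LinearMap.det_toMatrix b]
      congr 1
      ext i j
      simp [M, LinearMap.toMatrix_apply, Matrix.one_apply, Finsupp.single_apply, eq_comm]
    rw [h1, ← Polynomial.coe_evalRingHom, RingHom.map_det]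
    congr 1
    ext i j
    simp [Matrix.one_apply]
    split_ifs <;> simp <;> ring

open Metric MeasureTheory Topology NNReal in
lemma br_lip {E : Type*} [NormedAddCommGroup E] [NormedSpace ℝ E]
    (g : E → E) (K : ℝ≥0) (hK : LipschitzOnWith K g (closedBall 0 1))
    (h0 : ∀ x, 1 ≤ ‖x‖ → g x = 0) : LipschitzWith K g := by
  have key : ∀ x y : E, ‖x‖ ≤ 1 → 1 ≤ ‖y‖ → dist (g x) (g y) ≤ K * dist x y := by
    intro x y hx hy
    have hc : ContinuousOn (fun t : ℝ => ‖x + t • (y - x)‖) (Icc 0 1) := by fun_prop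
    have := intermediate_value_Icc (zero_le_one) hc
    obtain ⟨t, ht, ht1⟩ := this (show (1:ℝ) ∈ _ by simpa using ⟨hx, hy⟩)
    simp only at ht1
    set z := x + t • (y - x) with hz
    have hgz : g z = g y := by rw [h0 z ht1.ge, h0 y hy]
    rw [← hgz]
    refine (hK.dist_le_mul x (by simpa using hx) z (by simpa using ht1.le)).trans ?_
    gcongr
    rw [dist_eq_norm, dist_eq_norm, hz]
    have : x - (x + t • (y - x)) = t • (x - y) := by module
    rw [this, norm_smul, Real.norm_of_nonneg ht.1]
    nlinarith [norm_nonneg (x - y), ht.2]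
  refine LipschitzWith.of_dist_le_mul fun x y => ?_
  rcases le_total ‖x‖ 1 with hx | hx <;> rcases le_total ‖y‖ 1 with hy | hy
  · exact hK.dist_le_mul x (by simpa using hx) y (by simpa using hy)
  · exact key x y hx hy
  · rw [dist_comm, dist_comm x]; exact key y x hy hx
  · rw [h0 x hx, h0 y hy]; simp; positivity

open Metric MeasureTheory Topology NNReal in
lemma br_image {E : Type*} [NormedAddCommGroup E] [NormedSpace ℝ E] [CompleteSpace E]
    (g : E → E) (K : ℝ≥0) (hK : LipschitzWith K g) (h0 : ∀ x, 1 ≤ ‖x‖ → g x = 0)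
    (t : ℝ) (ht : 0 ≤ t) (htK : t * K < 1) :
    InjOn (fun x => x + t • g x) (ball 0 1) ∧
    (fun x => x + t • g x) '' (ball 0 1) = ball 0 1 := by
  rcases subsingleton_or_nontrivial E with hE | hE
  · refine ⟨fun x _ y _ _ => Subsingleton.elim _ _, ?_⟩
    have : (fun x : E => x + t • g x) = id := funext fun x => Subsingleton.elim _ _
    rw [this, image_id]
  have happ : ApproximatesLinearOn (fun x => x + t • g x)
      ((ContinuousLinearEquiv.refl ℝ E : E ≃L[ℝ] E) : E →L[ℝ] E) univ (NNReal.mk t ht * K) := by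
    intro x _ y _
    have : x + t • g x - (y + t • g y) -
      ((ContinuousLinearEquiv.refl ℝ E : E ≃L[ℝ] E) : E →L[ℝ] E) (x - y) = t • (g x - g y) := by
      simp; module
    rw [this, norm_smul, Real.norm_of_nonneg ht]
    have := hK.dist_le_mul x y
    rw [dist_eq_norm, dist_eq_norm] at this
    calc t * ‖g x - g y‖ ≤ t * (K * ‖x - y‖) := by gcongr
      _ = _ := by simp [mul_assoc]
  have hc : Subsingleton E ∨ (NNReal.mk t ht * K : ℝ≥0) < ‖((ContinuousLinearEquiv.refl ℝ E).symm : E →L[ℝ] E)‖₊⁻¹ := by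
    right
    have : ‖((ContinuousLinearEquiv.refl ℝ E).symm : E →L[ℝ] E)‖₊ = 1 := by
      have : ((ContinuousLinearEquiv.refl ℝ E).symm : E →L[ℝ] E) = ContinuousLinearMap.id ℝ E := by
        ext; simp
      rw [this]; ext; simp
    rw [this, inv_one]
    exact_mod_cast htK
  have hinj : Function.Injective (fun x => x + t • g x) := by
    intro x y h
    exact happ.injOn hc (mem_univ x) (mem_univ y) h
  have hsurj : Function.Surjective (fun x => x + t • g x) := happ.surjective hc
  refine ⟨hinj.injOn, ?_⟩
  have hid : ∀ x : E, 1 ≤ ‖x‖ → x + t • g x = x := fun x hx => by rw [h0 x hx]; simp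
  ext y
  constructor
  · rintro ⟨x, hx, rfl⟩
    by_contra hy
    simp only [mem_ball, dist_zero_right, not_lt] at hy hx
    have := hinj (hid _ hy)
    simp only at this
    rw [this] at hy
    linarith
  · intro hy
    obtain ⟨x, hx⟩ := hsurj y
    refine ⟨x, ?_, hx⟩
    by_contra hx'
    simp only [mem_ball, dist_zero_right, not_lt] at hx' hy
    simp only [hid x hx'] at hx
    rw [hx] at hx'
    linarith

open Metric MeasureTheory Topology NNReal in
lemma br_no_retraction_s17 {E : Type*} [NormedAddCommGroup E] [InnerProductSpace ℝ E]
    [FiniteDimensional ℝ E] [MeasurableSpace E] [BorelSpace E] (r : E → E)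
    (hr : ∀ x ∈ closedBall (0 : E) 1, ContDiffAt ℝ 1 r x)
    (h1 : ∀ x ∈ closedBall (0 : E) 1, ‖r x‖ = 1)
    (h2 : ∀ x, ‖x‖ = 1 → r x = x) : False := by
  let _ : MeasureSpace E := measureSpaceOfInnerProductSpace
  set s : Set E := ball 0 1 with hs
  have hsub : s ⊆ closedBall (0:E) 1 := ball_subset_closedBall
  have hcomp : IsCompact (closedBall (0:E) 1) := isCompact_closedBall _ _
  -- the perturbation
  obtain ⟨K, hK⟩ : ∃ K, LipschitzOnWith K (fun x => r x - x) (closedBall (0:E) 1) := by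
    refine ContDiffOn.exists_lipschitzOnWith (n := 1) ?_ one_ne_zero (convex_closedBall _ _) hcomp
    exact fun x hx => ((hr x hx).sub contDiffAt_id).contDiffWithinAt
  set g : E → E := (closedBall (0:E) 1).indicator (fun x => r x - x) with hg
  have hg0 : ∀ x, 1 ≤ ‖x‖ → g x = 0 := by
    intro x hx
    by_cases h : x ∈ closedBall (0:E) 1
    · rw [hg, indicator_of_mem h, h2 x (le_antisymm (by simpa using h) hx), sub_self]
    · rw [hg, indicator_of_notMem h]
  have hgK : LipschitzWith K g := by
    refine br_lip g K ?_ hg0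
    intro x hx y hy
    rw [hg, indicator_of_mem hx, indicator_of_mem hy]
    exact hK hx hy
  set A : E → E →L[ℝ] E := fun x => fderiv ℝ r x - ContinuousLinearMap.id ℝ E with hA
  have hAc : ContinuousOn A (closedBall (0:E) 1) := by
    intro x hx
    have := ((hr x hx).fderiv_right (m := 0) (by norm_num)).continuousAt
    exact (this.sub continuousAt_const).continuousWithinAt
  obtain ⟨C, hC⟩ := hcomp.exists_bound_of_continuousOn hAc
  have hdet1 : ∀ᶠ L : E →L[ℝ] E in 𝓝 (ContinuousLinearMap.id ℝ E), 0 < L.det := by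
    have := (ContinuousLinearMap.continuous_det (𝕜 := ℝ) (E := E)).tendsto (ContinuousLinearMap.id ℝ E)
    refine this.eventually (lt_mem_nhds ?_)
    simp [ContinuousLinearMap.det]
  obtain ⟨ε, hε, hball⟩ := Metric.eventually_nhds_iff.1 hdet1
  -- small times
  have hC0 : 0 ≤ C := (norm_nonneg _).trans (hC 0 (by simp))
  set t0 : ℝ := min (1 / (K + 1)) (ε / (C + 1)) with ht0
  have ht0pos : 0 < t0 := by
    refine lt_min ?_ ?_ <;> positivity
  have hintg : ∀ t : ℝ, IntegrableOn (fun x => (ContinuousLinearMap.id ℝ E + t • A x).det) s volume := by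
    intro t
    refine IntegrableOn.mono_set ?_ hsub
    refine ContinuousOn.integrableOn_compact hcomp ?_
    refine ContinuousLinearMap.continuous_det.comp_continuousOn ?_
    exact continuousOn_const.add (hAc.const_smul t)
  have hsmall : ∀ t : ℝ, 0 ≤ t → t < t0 →
      ∫ x in s, (ContinuousLinearMap.id ℝ E + t • A x).det = volume.real s := by
    intro t ht htt
    have ht1 : t * K < 1 := by
      have := htt.trans_le (min_le_left _ _)
      rw [lt_div_iff₀ (by positivity)] at this
      linarith
    obtain ⟨hinj, himg⟩ := br_image g K hgK hg0 t ht ht1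
    have hder : ∀ x ∈ s, HasFDerivWithinAt (fun x => x + t • g x)
        (ContinuousLinearMap.id ℝ E + t • A x) s x := by
      intro x hx
      have h := ((hr x (hsub hx)).differentiableAt one_ne_zero).hasFDerivAt
      have h' : HasFDerivAt (fun x => x + t • (r x - x)) (ContinuousLinearMap.id ℝ E + t • A x) x :=
        (hasFDerivAt_id x).add ((h.sub (hasFDerivAt_id x)).const_smul t)
      refine h'.hasFDerivWithinAt.congr' (fun y hy => ?_) hx
      rw [hg, indicator_of_mem (hsub hy)]
    have := integral_image_eq_integral_abs_det_fderiv_smul volume measurableSet_ball hder hinj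
      (fun _ => (1:ℝ))
    rw [himg] at this
    simp only [smul_eq_mul, mul_one, setIntegral_const] at this
    rw [this]
    refine setIntegral_congr_fun measurableSet_ball fun x hx => ?_
    refine (abs_of_pos (hball ?_)).symm
    rw [dist_eq_norm, add_sub_cancel_left, norm_smul, Real.norm_of_nonneg ht]
    have h3 := htt.trans_le (min_le_right _ _)
    rw [lt_div_iff₀ (by positivity)] at h3
    have := hC x (hsub hx)
    nlinarith
  obtain ⟨v, w, hv, hw⟩ := br_weights (Module.finrank ℝ E) t0 ht0pos
  have hone : ∫ x in s, (ContinuousLinearMap.id ℝ E + (1:ℝ) • A x).det = volume.real s := by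
    have hpt : ∀ x, (ContinuousLinearMap.id ℝ E + (1:ℝ) • A x).det =
        ∑ i ∈ Finset.range (Module.finrank ℝ E + 1), w i * (ContinuousLinearMap.id ℝ E + (v i) • A x).det := by
      intro x
      obtain ⟨p, hp, hpe⟩ := br_det_poly (A x)
      simp only [← hpe]
      exact hw p hp
    simp only [hpt]
    rw [integral_finsetSum _ (fun i _ => (hintg (v i)).const_mul (w i))]
    have hw1 := hw 1 (by simp)
    simp only [Polynomial.eval_one, mul_one] at hw1
    calc _ = ∑ i ∈ Finset.range (Module.finrank ℝ E + 1), w i * volume.real s := by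
          refine Finset.sum_congr rfl fun i hi => ?_
          rw [integral_const_mul, hsmall _ (hv i hi).1 (hv i hi).2]
      _ = _ := by rw [← Finset.sum_mul, ← hw1, one_mul]
  have hzero : ∫ x in s, (ContinuousLinearMap.id ℝ E + (1:ℝ) • A x).det = 0 := by
    refine setIntegral_eq_zero_of_forall_eq_zero fun x hx => ?_
    have : ContinuousLinearMap.id ℝ E + (1:ℝ) • A x = fderiv ℝ r x := by
      rw [hA, one_smul]; simp
    rw [this]
    by_contra hne
    have hsurj : Function.Surjective (fderiv ℝ r x) := by
      have hu : IsUnit (LinearMap.det (fderiv ℝ r x : E →ₗ[ℝ] E)) := isUnit_iff_ne_zero.2 hne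
      exact ((Module.End.isUnit_iff _).1 ((LinearMap.isUnit_iff_isUnit_det _).2 hu)).surjective
    obtain ⟨h, hh⟩ := hsurj (r x)
    have hd := ((hr x (hsub hx)).differentiableAt one_ne_zero).hasFDerivAt
    have hd2 := hd.inner ℝ hd
    have hconst : HasFDerivAt (fun y => inner ℝ (r y) (r y)) (0 : E →L[ℝ] ℝ) x := by
      refine (hasFDerivAt_const (1:ℝ) x).congr_of_eventuallyEq ?_
      filter_upwards [isOpen_ball.mem_nhds hx] with y hy
      rw [real_inner_self_eq_norm_sq, h1 y (hsub hy)]; norm_num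
    have := congrArg (fun L => L h) (hd2.unique hconst)
    simp [hh, fderivInnerCLM_apply] at this
    have h5 := h1 x (hsub hx)
    rw [this] at h5
    simp at h5
  rw [hzero] at hone
  have : 0 < volume.real s := by
    refine ENNReal.toReal_pos ?_ measure_ball_lt_top.ne
    exact (measure_ball_pos _ _ one_pos).ne'
  linarith

open Metric MeasureTheory Topology NNReal in
lemma br_smooth {E : Type*} [NormedAddCommGroup E] [InnerProductSpace ℝ E]
    [FiniteDimensional ℝ E] [MeasurableSpace E] [BorelSpace E] (f : E → E)
    (hf : ContDiff ℝ 1 f) (hlt : ∀ x ∈ closedBall (0 : E) 1, ‖f x‖ < 1)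
    (hne : ∀ x ∈ closedBall (0 : E) 1, f x ≠ x) : False := by
  set d : E → E := fun x => x - f x with hd
  have hdc : ContDiff ℝ 1 d := contDiff_id.sub hf
  have hd0 : ∀ x ∈ closedBall (0 : E) 1, 0 < ‖d x‖ ^ 2 := by
    intro x hx
    have : d x ≠ 0 := sub_ne_zero.2 (hne x hx).symm
    positivity
  set disc : E → ℝ := fun x => (inner ℝ x (d x)) ^ 2 + ‖d x‖ ^ 2 * (1 - ‖x‖ ^ 2) with hdisc
  have hb : ∀ x : E, ‖x‖ = 1 → 0 < inner ℝ x (d x) := by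
    intro x hx
    have h1 := hlt x (by simp [hx])
    have h2 := real_inner_le_norm x (f x)
    rw [hd]
    simp only [inner_sub_right, real_inner_self_eq_norm_sq, hx] at h2 ⊢
    linarith
  have hpos : ∀ x ∈ closedBall (0 : E) 1, 0 < disc x := by
    intro x hx
    have hx1 : ‖x‖ ≤ 1 := by simpa using hx
    rcases hx1.lt_or_eq with h | h
    · have h3 : 0 < 1 - ‖x‖ ^ 2 := by nlinarith [norm_nonneg x]
      have := mul_pos (hd0 x hx) h3
      simp only [hdisc]; positivity
    · have := hb x h
      simp only [hdisc, h]; simp; positivity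
  have hdiscc : ContDiff ℝ 1 disc := by
    have h1 : ContDiff ℝ 1 (fun x => inner ℝ x (d x)) := contDiff_id.inner ℝ hdc
    have h2 : ContDiff ℝ 1 (fun x => ‖d x‖ ^ 2) := hdc.norm_sq ℝ
    have h3 : ContDiff ℝ 1 (fun x : E => ‖x‖ ^ 2) := contDiff_id.norm_sq ℝ
    exact (h1.pow 2).add (h2.mul (contDiff_const.sub h3))
  set lam : E → ℝ := fun x => (- inner ℝ x (d x) + √(disc x)) / ‖d x‖ ^ 2 with hlam
  refine br_no_retraction_s17 (fun x => x + lam x • d x) ?_ ?_ ?_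
  · intro x hx
    have h1 : ContDiffAt ℝ 1 (fun x => inner ℝ x (d x)) x := (contDiff_id.inner ℝ hdc).contDiffAt
    have h2 : ContDiffAt ℝ 1 (fun x => ‖d x‖ ^ 2) x := (hdc.norm_sq ℝ).contDiffAt
    have h3 : ContDiffAt ℝ 1 lam x :=
      (h1.neg.add (hdiscc.contDiffAt.sqrt (hpos x hx).ne')).div h2 (hd0 x hx).ne'
    exact contDiffAt_id.add (h3.smul hdc.contDiffAt)
  · intro x hx
    have hq : ‖x + lam x • d x‖ ^ 2 = 1 := by
      rw [norm_add_sq_real, inner_smul_right, norm_smul, mul_pow, Real.norm_eq_abs, sq_abs]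
      have hs := Real.sq_sqrt (hpos x hx).le
      have hD := hd0 x hx
      simp only [hlam]
      simp only [hdisc] at hs ⊢
      set b := inner ℝ x (d x)
      set a := ‖d x‖ ^ 2
      set q := √(b ^ 2 + a * (1 - ‖x‖ ^ 2))
      field_simp
      nlinarith
    have := norm_nonneg (x + lam x • d x)
    nlinarith
  · intro x hx
    have : lam x = 0 := by
      simp only [hlam, hdisc, hx]
      simp [Real.sqrt_sq (hb x hx).le]
    simp [this]

open Metric MeasureTheory Topology NNReal in
lemma br_cont {E : Type*} [NormedAddCommGroup E] [InnerProductSpace ℝ E]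
    [FiniteDimensional ℝ E] [MeasurableSpace E] [BorelSpace E] (f : E → E)
    (hf : Continuous f) (hlt : ∀ x, ‖f x‖ ≤ 1 / 2) : ∃ x, f x = x := by
  by_contra hcon
  push Not at hcon
  obtain ⟨x0, -, hx0⟩ := (isCompact_closedBall (0:E) 1).exists_isMinOn ⟨0, by simp⟩
    (f := fun x => ‖f x - x‖) (by fun_prop)
  set m := ‖f x0 - x0‖ with hm
  have hm0 : 0 < m := norm_pos_iff.2 (sub_ne_zero.2 (hcon x0))
  obtain ⟨g, hg, hgf, -⟩ := hf.exists_contDiff_approx 1 (ε := fun _ => min m (1/2))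
    continuous_const (fun _ => by positivity)
  refine br_smooth g (by exact_mod_cast hg) ?_ ?_
  · intro x _
    have h1 := (hgf x).trans_le (min_le_right _ _)
    rw [dist_eq_norm] at h1
    have := norm_add_le (g x - f x) (f x)
    rw [sub_add_cancel] at this
    linarith [hlt x]
  · intro x hx h
    have h1 := (hgf x).trans_le (min_le_left _ _)
    rw [dist_eq_norm, h, norm_sub_rev] at h1
    have := hx0 hx
    simp only [mem_ofPred_eq] at this
    linarith

/-- coordinatewise truncation -/
noncomputable def brClamp {n : ℕ} (R : ℝ) (y : Fin n → ℝ) : Fin n → ℝ :=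
  fun i => max (-R) (min R (y i))

lemma brClamp_norm {n : ℕ} {R : ℝ} (hR : 0 ≤ R) (y : Fin n → ℝ) : ‖brClamp R y‖ ≤ R := by
  rw [pi_norm_le_iff_of_nonneg hR]
  intro i
  rw [Real.norm_eq_abs, abs_le, brClamp]
  exact ⟨le_max_left _ _, max_le (by linarith) (min_le_left _ _)⟩

lemma brClamp_eq {n : ℕ} {R : ℝ} {y : Fin n → ℝ} (hy : ‖y‖ ≤ R) : brClamp R y = y := by
  ext i
  have h1 := (norm_le_pi_norm y i).trans hy
  rw [Real.norm_eq_abs, abs_le] at h1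
  rw [brClamp, min_eq_right h1.2, max_eq_right h1.1]

lemma brClamp_lip {n : ℕ} (R : ℝ) : LipschitzWith 1 (brClamp (n := n) R) := by
  refine LipschitzWith.of_dist_le_mul fun x y => ?_
  rw [dist_pi_le_iff (by positivity)]
  intro i
  rw [NNReal.coe_one, one_mul]
  refine le_trans ?_ (dist_le_pi_dist x y i)
  simp only [brClamp, Real.dist_eq]
  refine (abs_max_sub_max_le_max _ _ _ _).trans ?_
  simp only [sub_self, abs_zero]
  refine max_le (abs_nonneg _) ((abs_min_sub_min_le_max _ _ _ _).trans ?_)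
  simp

open Metric MeasureTheory Topology NNReal in
lemma br_cube {n : ℕ} (R : ℝ) (hR : 0 ≤ R) (f : (Fin n → ℝ) → (Fin n → ℝ))
    (hf : ContinuousOn f (closedBall 0 R)) (hm : MapsTo f (closedBall 0 R) (closedBall 0 R)) :
    ∃ x ∈ closedBall (0 : Fin n → ℝ) R, f x = x := by
  set φ : (Fin n → ℝ) ≃L[ℝ] EuclideanSpace ℝ (Fin n) := (EuclideanSpace.equiv (Fin n) ℝ).symm
  set C := ‖(φ : (Fin n → ℝ) →L[ℝ] EuclideanSpace ℝ (Fin n))‖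
  set s : ℝ := 2 * (C * R) + 1 with hs
  have hC : 0 ≤ C := norm_nonneg _
  have hs0 : 0 < s := by positivity
  have hcl : ∀ y, brClamp R y ∈ closedBall (0 : Fin n → ℝ) R := fun y => by
    simpa using brClamp_norm hR y
  have hfc : Continuous (fun y => f (brClamp R y)) :=
    hf.comp_continuous (brClamp_lip R).continuous hcl
  have hA : Continuous (fun x : EuclideanSpace ℝ (Fin n) => s⁻¹ • φ (f (brClamp R (φ.symm (s • x))))) := by
    have h2 : Continuous (fun x : EuclideanSpace ℝ (Fin n) => φ.symm (s • x)) :=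
      φ.symm.continuous.comp (continuous_const_smul s)
    exact (φ.continuous.comp (hfc.comp h2)).const_smul s⁻¹
  have hB : ∀ x : EuclideanSpace ℝ (Fin n), ‖s⁻¹ • φ (f (brClamp R (φ.symm (s • x))))‖ ≤ 1 / 2 := by
    intro x
    rw [norm_smul, norm_inv, Real.norm_of_nonneg hs0.le]
    have h1 : ‖φ (f (brClamp R (φ.symm (s • x))))‖ ≤ C * R := by
      refine ((φ : (Fin n → ℝ) →L[ℝ] EuclideanSpace ℝ (Fin n)).le_opNorm _).trans ?_
      gcongr
      simpa using hm (hcl (φ.symm (s • x)))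
    rw [inv_mul_le_iff₀ hs0]
    linarith
  obtain ⟨x, hx⟩ := br_cont _ hA hB
  set z := φ.symm (s • x) with hz
  have hzf : f (brClamp R z) = z := by
    rw [hz]
    conv_rhs => rw [← hx]
    rw [smul_smul, mul_inv_cancel₀ hs0.ne', one_smul, φ.symm_apply_apply]
  have hzm : z ∈ closedBall (0 : Fin n → ℝ) R := by rw [← hzf]; exact hm (hcl z)
  refine ⟨z, hzm, ?_⟩
  rw [brClamp_eq (by simpa using hzm)] at hzf
  exact hzf

open Metric MeasureTheory Topology NNReal in
lemma per_ext {E : Type*} [NormedAddCommGroup E] [NormedSpace ℝ E] [CompleteSpace E]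
    (y : ℝ → E) (G : ℝ → E) (hy : ContinuousOn y (Icc 0 1)) (h01 : y 0 = y 1)
    (hG : Continuous G) (hGp : ∀ s, G (s + 1) = G s)
    (hd : ∀ s ∈ Ioo (0:ℝ) 1, HasDerivAt y (G s) s) :
    ∀ s, HasDerivAt (fun s => y (Int.fract s)) (G s) s := by
  have hintg : ∀ s ∈ Icc (0:ℝ) 1, ∫ u in (0:ℝ)..s, G u = y s - y 0 := by
    intro s hs
    refine intervalIntegral.integral_eq_sub_of_hasDerivAt_of_le hs.1
      (hy.mono (Icc_subset_Icc_right hs.2)) (fun x hx => hd x ⟨hx.1, hx.2.trans_le hs.2⟩)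
      (hG.intervalIntegrable _ _)
  set Z : ℝ → E := fun s => y 0 + ∫ u in (0:ℝ)..s, G u with hZ
  have hper : Function.Periodic Z 1 := by
    intro s
    have hGp' : Function.Periodic G 1 := hGp
    simp only [hZ]
    have h1 := intervalIntegral.integral_add_adjacent_intervals (μ := volume)
      (hG.intervalIntegrable 0 s) (hG.intervalIntegrable s (s+1))
    rw [← h1, hGp'.intervalIntegral_add_eq s 0, zero_add, hintg 1 (by simp), h01]
    simp
  have hYZ : (fun s => y (Int.fract s)) = Z := by
    ext s
    have h1 : Z s = Z (Int.fract s) := by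
      have := hper.sub_int_mul_eq ⌊s⌋ (x := s)
      rw [mul_one] at this
      exact this.symm
    rw [h1]
    simp only [hZ]
    rw [hintg _ ⟨Int.fract_nonneg s, (Int.fract_lt_one s).le⟩]
    simp
  intro s
  rw [hYZ]
  exact (intervalIntegral.integral_hasDerivAt_right (hG.intervalIntegrable _ _)
    (hG.stronglyMeasurableAtFilter _ _) hG.continuousAt).const_add (y 0)

open Metric MeasureTheory Topology NNReal in
lemma per_orbit {n : ℕ} (β : ℝ → ℝ) (hβ : Continuous β) (hβp : ∀ s, β (s + 1) = β s)
    (hneg : ∫ s in (0:ℝ)..1, β s < 0) :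
    ∃ κ : ℝ, 0 < κ ∧ ∀ δ : ℝ, 0 < δ → ∀ (S : ℝ → (Fin n → ℝ) → (Fin n → ℝ)) (K : ℝ≥0),
      (∀ s ∈ Icc (0:ℝ) 1, LipschitzOnWith K (S s) (closedBall 0 δ)) →
      ContinuousOn (fun p : ℝ × (Fin n → ℝ) => S p.1 p.2) (univ ×ˢ closedBall 0 δ) →
      (∀ s, ∀ y ∈ closedBall (0 : Fin n → ℝ) δ, S (s + 1) y = S s y) →
      (∀ s ∈ Icc (0:ℝ) 1, ∀ y ∈ closedBall (0 : Fin n → ℝ) δ, ‖S s y‖ ≤ κ * δ) →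
      ∃ Y : ℝ → Fin n → ℝ, (∀ s, Y (s + 1) = Y s) ∧ (∀ s, Y s ∈ closedBall (0 : Fin n → ℝ) δ) ∧
        ∀ s, HasDerivAt Y (β s • Y s + S s (Y s)) s := by
  set q : ℝ → ℝ := fun s => Real.exp (∫ u in (0:ℝ)..s, β u) with hq
  have hqd : ∀ s, HasDerivAt q (β s * q s) s := by
    intro s
    have := (intervalIntegral.integral_hasDerivAt_right (hβ.intervalIntegrable 0 s)
      (hβ.stronglyMeasurableAtFilter _ _) hβ.continuousAt).exp
    rw [mul_comm]; exact this
  have hqc : Continuous q := continuous_iff_continuousAt.2 fun s => (hqd s).continuousAt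
  have hqpos : ∀ s, 0 < q s := fun s => Real.exp_pos _
  have hq0 : q 0 = 1 := by simp [hq]
  set l := q 1 with hl
  have hl0 : 0 < l := hqpos 1
  have hl1 : l < 1 := by rw [hl, hq]; simpa using hneg
  obtain ⟨M, hM⟩ := (isCompact_Icc (a := (0:ℝ)) (b := 1)).exists_bound_of_continuousOn hqc.continuousOn
  obtain ⟨m, hm⟩ := (isCompact_Icc (a := (0:ℝ)) (b := 1)).exists_bound_of_continuousOn
    (hqc.inv₀ (fun s => (hqpos s).ne')).continuousOn
  have hM' : ∀ s ∈ Icc (0:ℝ) 1, q s ≤ M := fun s hs => (le_abs_self _).trans (hM s hs)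
  have hm' : ∀ s ∈ Icc (0:ℝ) 1, (q s)⁻¹ ≤ m := fun s hs => (le_abs_self _).trans (hm s hs)
  have hM0 : 0 < M := (hqpos 0).trans_le (hM' 0 (by simp))
  have hm0 : 0 < m := (inv_pos.2 (hqpos 0)).trans_le (hm' 0 (by simp))
  refine ⟨(1 - l) / (M * m), div_pos (by linarith) (by positivity), ?_⟩
  intro δ hδ S K hSK hSc hSp hSb
  set W : ℝ → (Fin n → ℝ) → (Fin n → ℝ) := fun s v => (q s)⁻¹ • S s (brClamp δ (q s • v)) with hW
  have hcl : ∀ y, brClamp δ y ∈ closedBall (0 : Fin n → ℝ) δ := fun y => by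
    simpa using brClamp_norm hδ.le y
  set L : ℝ := (1 - l) * δ / M with hL
  have hLnn : 0 ≤ L := by
    have : 0 ≤ 1 - l := by linarith
    positivity
  set d0 : ℝ := l * δ / M with hd0
  have hd0nn : 0 ≤ d0 := by positivity
  have hsum : M * (d0 + L) = δ := by rw [hd0, hL]; field_simp; ring
  have hsum2 : l * (d0 + L) = d0 := by rw [hd0, hL]; field_simp; ring
  have hWb : ∀ s ∈ Icc (0:ℝ) 1, ∀ v, ‖W s v‖ ≤ L := by
    intro s hs v
    rw [hW]
    simp only [norm_smul, norm_inv, Real.norm_of_nonneg (hqpos s).le]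
    have h1 := hSb s hs _ (hcl (q s • v))
    calc (q s)⁻¹ * ‖S s (brClamp δ (q s • v))‖ ≤ m * ((1 - l) / (M * m) * δ) :=
          mul_le_mul (hm' s hs) h1 (norm_nonneg _) hm0.le
      _ = L := by rw [hL]; field_simp
  have hPL : IsPicardLindelof W (⟨0, by simp⟩ : Icc (0:ℝ) 1) (0 : Fin n → ℝ)
      (NNReal.mk (d0 + L) (by positivity)) (NNReal.mk d0 hd0nn) (NNReal.mk L hLnn)
      (NNReal.mk m hm0.le * K * NNReal.mk M hM0.le) := by
    refine ⟨?_, ?_, ?_, ?_⟩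
    · intro s hs
      refine LipschitzOnWith.of_dist_le_mul fun x _ y _ => ?_
      simp only [hW]
      rw [dist_smul₀, norm_inv, Real.norm_of_nonneg (hqpos s).le]
      have h1 := (hSK s hs).dist_le_mul _ (hcl (q s • x)) _ (hcl (q s • y))
      have h2 := (brClamp_lip (n := n) δ).dist_le_mul (q s • x) (q s • y)
      rw [dist_smul₀, Real.norm_of_nonneg (hqpos s).le, NNReal.coe_one, one_mul] at h2
      calc _ ≤ m * (K * (M * dist x y)) := by
            refine mul_le_mul (hm' s hs) (h1.trans ?_) dist_nonneg hm0.le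
            gcongr
            exact h2.trans (mul_le_mul_of_nonneg_right (hM' s hs) dist_nonneg)
        _ = _ := by change _ = m * K * M * _; ring
    · intro v _
      refine ContinuousOn.smul (hqc.inv₀ (fun s => (hqpos s).ne')).continuousOn ?_
      refine Continuous.continuousOn ?_
      refine hSc.comp_continuous (f := fun s => (s, brClamp δ (q s • v))) ?_ ?_
      · exact continuous_id.prodMk ((brClamp_lip δ).continuous.comp (hqc.smul continuous_const))
      · exact fun s => ⟨mem_univ _, hcl _⟩
    · intro s hs v _
      exact hWb s hs v
    · change L * max (1 - 0) (0 - 0) ≤ d0 + L - d0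
      simp
  obtain ⟨α, hα, L', hα'⟩ := hPL.exists_forall_mem_closedBall_eq_hasDerivWithinAt_lipschitzOnWith
  change ∀ x ∈ closedBall (0 : Fin n → ℝ) d0, α x 0 = x ∧ _ at hα
  change ∀ t ∈ Icc (0:ℝ) 1, LipschitzOnWith L' (fun x => α x t) (closedBall (0 : Fin n → ℝ) d0) at hα'
  have hαb : ∀ x ∈ closedBall (0 : Fin n → ℝ) d0, ∀ s ∈ Icc (0:ℝ) 1, ‖α x s‖ ≤ d0 + L := by
    intro x hx s hs
    have h1 := norm_image_sub_le_of_norm_deriv_le_segment' (hα x hx).2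
      (fun t ht => hWb t ⟨ht.1, ht.2.le⟩ _) s hs
    rw [(hα x hx).1, sub_zero] at h1
    have h2 : ‖x‖ ≤ d0 := by simpa using hx
    have h3 := norm_add_le (α x s - x) x
    rw [sub_add_cancel] at h3
    nlinarith [hs.2]
  obtain ⟨v, hv, hfix⟩ := br_cube d0 hd0nn (fun x => l • α x 1)
    ((hα' 1 (by simp)).continuousOn.const_smul l) (by
      intro x hx
      have := hαb x hx 1 (by simp)
      simp only [mem_closedBall, dist_zero_right, norm_smul, Real.norm_of_nonneg hl0.le]
      rw [← hsum2]
      gcongr)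
  set y : ℝ → Fin n → ℝ := fun s => q s • α v s with hy
  have hyb : ∀ s ∈ Icc (0:ℝ) 1, y s ∈ closedBall (0 : Fin n → ℝ) δ := by
    intro s hs
    simp only [hy, mem_closedBall, dist_zero_right, norm_smul, Real.norm_of_nonneg (hqpos s).le]
    rw [← hsum]
    exact mul_le_mul (hM' s hs) (hαb v hv s hs) (norm_nonneg _) hM0.le
  have hyd : ∀ s ∈ Icc (0:ℝ) 1, HasDerivWithinAt y (β s • y s + S s (y s)) (Icc 0 1) s := by
    intro s hs
    have h1 := (hqd s).hasDerivWithinAt.smul ((hα v hv).2 s hs)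
    refine h1.congr_deriv ?_
    have h2 : brClamp δ (q s • α v s) = y s := brClamp_eq (by simpa using hyb s hs)
    simp only [hW]
    rw [h2, smul_smul, mul_inv_cancel₀ (hqpos s).ne', one_smul]
    simp only [hy, smul_smul]
    rw [add_comm]
  have hyc : ContinuousOn y (Icc 0 1) := fun s hs => (hyd s hs).continuousWithinAt
  have h01 : y 0 = y 1 := by
    simp only [hy]
    rw [hq0, one_smul, (hα v hv).1]
    exact hfix.symm
  set Y : ℝ → Fin n → ℝ := fun s => y (Int.fract s) with hY
  have hYc : Continuous Y := hyc.comp_fract'' h01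
  have hYp : ∀ s, Y (s + 1) = Y s := fun s => by simp [hY]
  have hYb : ∀ s, Y s ∈ closedBall (0 : Fin n → ℝ) δ := fun s =>
    hyb _ ⟨Int.fract_nonneg s, (Int.fract_lt_one s).le⟩
  refine ⟨Y, hYp, hYb, ?_⟩
  refine per_ext y (fun s => β s • Y s + S s (Y s)) hyc h01 ?_ ?_ ?_
  · refine (hβ.smul hYc).add ?_
    exact hSc.comp_continuous (f := fun s => (s, Y s)) (continuous_id.prodMk hYc)
      (fun s => ⟨mem_univ _, hYb s⟩)
  · intro s
    simp only [hYp, hβp, hSp s _ (hYb s)]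
  · intro s hs
    have : Y s = y s := by
      simp only [hY]; rw [Int.fract_eq_self.2 ⟨hs.1.le, hs.2⟩]
    simp only [this]
    exact (hyd s (Ioo_subset_Icc_self hs)).hasDerivAt (Icc_mem_nhds hs.1 hs.2)

open Metric MeasureTheory Topology NNReal in
lemma reparam (φ : ℝ → ℝ) (hφ : Continuous φ) (hpos : ∀ s, 0 < φ s) (hp : ∀ s, φ (s + 1) = φ s) :
    ∃ (θ : ℝ → ℝ) (ρ : ℝ), 0 < ρ ∧ (∀ t, HasDerivAt θ (φ (θ t)) t) ∧
      ∀ t, θ (t + 1 / ρ) = θ t + 1 := by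
  have hic : Continuous (fun s => (φ s)⁻¹) := hφ.inv₀ fun s => (hpos s).ne'
  set τ : ℝ → ℝ := fun s => ∫ u in (0:ℝ)..s, (φ u)⁻¹ with hτ
  have hd : ∀ s, HasDerivAt τ (φ s)⁻¹ s := fun s =>
    intervalIntegral.integral_hasDerivAt_right (hic.intervalIntegrable _ _)
      (hic.stronglyMeasurableAtFilter _ _) hic.continuousAt
  have hc : Continuous τ := continuous_iff_continuousAt.2 fun s => (hd s).continuousAt
  have hmono : StrictMono τ := strictMono_of_hasDerivAt_pos hd fun s => inv_pos.2 (hpos s)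
  have hτ0 : τ 0 = 0 := by simp [hτ]
  set T := τ 1 with hT
  have hT0 : 0 < T := by rw [← hτ0]; exact hmono one_pos
  have hadd : ∀ s, τ (s + 1) = τ s + T := by
    intro s
    have hper : Function.Periodic (fun s => (φ s)⁻¹) 1 := fun s => by simp only [hp]
    simp only [hτ, hT]
    have h1 := intervalIntegral.integral_add_adjacent_intervals (μ := volume)
      (hic.intervalIntegrable 0 s) (hic.intervalIntegrable s (s+1))
    rw [← h1, hper.intervalIntegral_add_eq s 0, zero_add]
  have hn : ∀ n : ℕ, τ n = n * T ∧ τ (-n) = - (n * T) := by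
    intro n
    induction n with
    | zero => simp [hτ0]
    | succ k ih =>
      refine ⟨?_, ?_⟩
      · push_cast; rw [hadd, ih.1]; ring
      · have := hadd (-(k + 1 : ℝ))
        rw [show -(k + 1 : ℝ) + 1 = -k by ring, ih.2] at this
        push_cast; linarith
  have hsurj : Function.Surjective τ := by
    intro t
    obtain ⟨n, hn'⟩ := exists_nat_ge (|t| / T)
    rw [div_le_iff₀ hT0] at hn'
    have h1 := abs_le.1 hn'
    have := intermediate_value_Icc (show (-(n:ℝ)) ≤ n by linarith [Nat.cast_nonneg (α := ℝ) n])
      hc.continuousOn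
    obtain ⟨s, -, hs⟩ := this (show t ∈ _ by rw [(hn n).1, (hn n).2]; exact ⟨h1.1, h1.2⟩)
    exact ⟨s, hs⟩
  set e := hmono.orderIsoOfSurjective τ hsurj with he
  have hτe : ∀ t, τ (e.symm t) = t := fun t => e.apply_symm_apply t
  refine ⟨e.symm, 1 / T, by positivity, ?_, ?_⟩
  · intro t
    have := HasDerivAt.of_local_left_inverse (f := τ) (g := e.symm) (a := t)
      e.symm.continuous.continuousAt (hd _) (inv_ne_zero (hpos _).ne') (Filter.Eventually.of_forall hτe)
    rwa [inv_inv] at this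
  · intro t
    rw [one_div_one_div]
    apply hmono.injective
    rw [hτe, hadd, hτe]

lemma perI {N : ℕ} {F : (Fin N → ℝ) → ℝ → ℝ}
    (hp : ∀ (Y : Fin N → ℝ) (z : ℝ), F (fun i => Y i + 1) (z + 1) = F Y z)
    (Y : Fin N → ℝ) (z : ℝ) (k : ℤ) : F (fun i => Y i + k) (z + k) = F Y z := by
  have h : Function.Periodic (fun t : ℝ => F (fun i => Y i + t) (z + t)) 1 := by
    intro t
    have := hp (fun i => Y i + t) (z + t)
    simp only [add_assoc] at this ⊢
    exact this
  have := h.int_mul k 0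
  simpa using this

open Metric MeasureTheory Topology NNReal in
lemma normB_bound {N : ℕ} (hN : 2 ≤ N) (H : (Fin N → ℝ) → Fin N → ℝ) (hH : Continuous H)
    (hp : ∀ Y : Fin N → ℝ, H (fun i => Y i + 1) = H Y) (Y : Fin N → ℝ) (hY : memB' Y) (i : Fin N) :
    |H Y i| ≤ normB_vec H := by
  refine le_csSup ?_ ⟨Y, hY, i, rfl⟩
  obtain ⟨C, hC⟩ := (isCompact_closedBall (0 : Fin N → ℝ) 2).exists_bound_of_continuousOn
    hH.continuousOn
  refine ⟨C, ?_⟩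
  rintro x ⟨Z, hZ, j, rfl⟩
  let i0 : Fin N := ⟨0, by omega⟩
  have h1 : H Z = H (fun i => Z i + ((-⌊Z i0⌋ : ℤ) : ℝ)) := by
    ext k
    exact (perI (F := fun Y _ => H Y k) (fun Y _ => by rw [hp]) Z 0 (-⌊Z i0⌋)).symm
  rw [h1]
  refine (norm_le_pi_norm (H (fun i => Z i + ((-⌊Z i0⌋ : ℤ) : ℝ))) j).trans (hC _ ?_)
  rw [mem_closedBall, dist_zero_right, pi_norm_le_iff_of_nonneg (by norm_num)]
  intro k
  have h2 := abs_le.1 (hZ k i0)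
  have h3 := Int.floor_le (Z i0)
  have h4 := Int.lt_floor_add_one (Z i0)
  rw [Real.norm_eq_abs, abs_le]
  push_cast
  constructor <;> linarith

/-- shift of the diagonal point -/
def shv {N : ℕ} (s : ℝ) (y : Fin N → ℝ) : Fin N → ℝ := fun i => s + y i

lemma shv_zero {N : ℕ} (s : ℝ) : shv s (0 : Fin N → ℝ) = fun _ => s := by
  ext i; simp [shv]

lemma shv_add_int {N : ℕ} (s : ℝ) (y : Fin N → ℝ) (k : ℤ) :
    shv (s + k) y = fun i => shv s y i + k := by
  ext i; simp [shv]; ring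

lemma shv_contDiff {N : ℕ} {n : WithTop ℕ∞} :
    ContDiff ℝ n (fun p : ℝ × (Fin N → ℝ) => shv p.1 p.2) := by
  unfold shv
  rw [contDiff_pi]
  intro i
  fun_prop

section
variable {N : ℕ} {F : (Fin N → ℝ) → ℝ → ℝ}

lemma hasDerivAt_Z (hF : ContDiff ℝ 2 (fun p : (Fin N → ℝ) × ℝ => F p.1 p.2))
    (Y : Fin N → ℝ) (z : ℝ) : HasDerivAt (fun u => F Y u) (pderZ F Y z) z := by
  have h1 : ContDiff ℝ 2 (fun u : ℝ => F Y u) :=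
    hF.comp (contDiff_const.prodMk contDiff_id : ContDiff ℝ 2 (fun u : ℝ => (Y, u)))
  exact (h1.differentiable (by norm_num) z).hasDerivAt

lemma pderZ_contDiff (hF : ContDiff ℝ 2 (fun p : (Fin N → ℝ) × ℝ => F p.1 p.2)) :
    ContDiff ℝ 1 (fun p : (Fin N → ℝ) × ℝ => pderZ F p.1 p.2) := by
  have h : (fun p : (Fin N → ℝ) × ℝ => pderZ F p.1 p.2) =
      fun p => fderiv ℝ (fun p : (Fin N → ℝ) × ℝ => F p.1 p.2) p (0, 1) := by
    ext p
    have h1 := (hF.differentiable (by norm_num) p).hasFDerivAt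
    have h2 : HasDerivAt (fun u : ℝ => (p.1, u)) ((0 : Fin N → ℝ), (1:ℝ)) p.2 :=
      (hasDerivAt_const p.2 p.1).prodMk (hasDerivAt_id p.2)
    have h3 := HasFDerivAt.comp_hasDerivAt (f := fun u : ℝ => (p.1, u)) p.2 h1 h2
    exact (hasDerivAt_Z hF p.1 p.2).unique h3
  rw [h]
  exact (hF.fderiv_right (m := 1) (by norm_num)).clm_apply contDiff_const

lemma pderZ_per (hp : ∀ (Y : Fin N → ℝ) (z : ℝ), F (fun i => Y i + 1) (z + 1) = F Y z)
    (Y : Fin N → ℝ) (z : ℝ) : pderZ F (fun i => Y i + 1) (z + 1) = pderZ F Y z := by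
  unfold pderZ
  rw [← deriv_comp_add_const (fun u => F (fun i => Y i + 1) u) 1 z]
  congr 1
  ext u
  exact hp Y u

end

open Metric MeasureTheory Topology NNReal in
/-- **Main Result II.** Under `(H)` and `(H*)` there is `D* > 0`
such that for every `D ∈ (0, D*]` there is `𝓇 > 0` such that for every `C¹`,
`𝟙`-periodic perturbation `H` with `‖H‖_B < 𝓇` there are an initial condition
`X*`, a frequency `ρ > 0`, and `C¹` functions `Ψ₁, …, Ψ_N` of period `1/ρ`, such
that the solution of the perturbed system starting at `X*` at time `t₀` is defined
for all `t ≥ t₀` and satisfies `xᵢ(t) = ρ t + Ψᵢ(t)`. -/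
theorem main_result_II
    (N : ℕ) (hN : 2 ≤ N)
    (F : (Fin N → ℝ) → ℝ → ℝ) (hF : HypH F) (hFstar : HypHstar F)
    (t₀ : ℝ) :
    ∃ Dstar : ℝ, 0 < Dstar ∧
      ∀ D ∈ Set.Ioc (0:ℝ) Dstar,
        ∃ r : ℝ, 0 < r ∧
          ∀ H : (Fin N → ℝ) → Fin N → ℝ,
            ContDiff ℝ 1 (fun Y => H Y) →
            (∀ Y : Fin N → ℝ, H (fun i => Y i + 1) = H Y) →
            normB_vec H < r →
            ∃ Xstar : Fin N → ℝ, ∃ ρ : ℝ, 0 < ρ ∧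
              ∃ Ψ : Fin N → ℝ → ℝ,
                (∀ i, ContDiff ℝ 1 (Ψ i)) ∧
                (∀ i, ∀ t : ℝ, Ψ i (t + 1 / ρ) = Ψ i t) ∧
                ∃ X : ℝ → Fin N → ℝ,
                  X t₀ = Xstar ∧
                  (∀ t : ℝ, t₀ ≤ t → ∀ i,
                    HasDerivAt (fun τ => X τ i) (F (X t) (X t i) + H (X t) i) t) ∧
                  (∀ t : ℝ, t₀ ≤ t → ∀ i, X t i = ρ * t + Ψ i t) := by
  obtain ⟨hC2, -, -, -, hper, hα⟩ := hF
  have hC0 : Continuous (fun p : (Fin N → ℝ) × ℝ => F p.1 p.2) := hC2.continuous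
  have hP1 := pderZ_contDiff hC2
  have hPc := hP1.continuous
  set α := alphaConst F with hαdef
  have hFs : Continuous (fun s : ℝ => F (fun _ => s) s) :=
    hC0.comp (f := fun s : ℝ => ((fun _ => s : Fin N → ℝ), s)) (by fun_prop)
  have hαle : ∀ s ∈ Icc (0:ℝ) 1, α ≤ F (fun _ => s) s := by
    intro s hs
    refine csInf_le ?_ ⟨s, hs, rfl⟩
    exact (isCompact_Icc.image hFs).bddBelow
  have hdiag : ∀ s : ℝ, 0 < F (fun _ => s) s := by
    intro s
    have h1 := perI hper (fun _ => Int.fract s) (Int.fract s) ⌊s⌋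
    rw [Int.fract_add_floor] at h1
    rw [h1]
    exact hα.trans_le (hαle _ ⟨Int.fract_nonneg s, (Int.fract_lt_one s).le⟩)
  -- the linear coefficient
  set β : ℝ → ℝ := fun s => pderZ F (fun _ => s) s / F (fun _ => s) s with hβdef
  have hdc : ContDiff ℝ 1 (fun s : ℝ => ((fun _ => s : Fin N → ℝ), s)) :=
    (contDiff_pi.2 fun _ => contDiff_id).prodMk contDiff_id
  have hβ1 : ContDiff ℝ 1 β :=
    (hP1.comp hdc).div ((hC2.of_le (by norm_num)).comp hdc) (fun s => (hdiag s).ne')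
  have hβp : ∀ s, β (s + 1) = β s := by
    intro s
    simp only [hβdef]
    rw [hper (fun _ => s) s, pderZ_per hper (fun _ => s) s]
  obtain ⟨κ, hκ, hmain⟩ := per_orbit (n := N) β hβ1.continuous hβp hFstar
  -- choice of the tube
  have htube : ∀ᶠ x : (Fin N → ℝ) × ℝ in 𝓝 0, ∀ s ∈ Icc (0:ℝ) 1,
      (α / 2 < F (shv s x.1) s ∧
        |pderZ F (shv s x.1) (s + x.2) / F (shv s x.1) s - β s| < κ / 2) := by
    refine IsCompact.eventually_forall_of_forall_eventually isCompact_Icc ?_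
    intro s hs
    have hsh : Continuous (fun p : ((Fin N → ℝ) × ℝ) × ℝ => shv p.2 p.1.1) :=
      (shv_contDiff (n := 0)).continuous.comp (by fun_prop : Continuous (fun p : ((Fin N → ℝ) × ℝ) × ℝ => (p.2, p.1.1)))
    have hc1 : Continuous (fun p : ((Fin N → ℝ) × ℝ) × ℝ => F (shv p.2 p.1.1) p.2) :=
      hC0.comp (hsh.prodMk continuous_snd)
    have hc2 : Continuous (fun p : ((Fin N → ℝ) × ℝ) × ℝ => pderZ F (shv p.2 p.1.1) (p.2 + p.1.2)) :=
      hPc.comp (hsh.prodMk (by fun_prop))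
    have hv1 : F (shv s (0 : Fin N → ℝ)) s = F (fun _ => s) s := by rw [shv_zero]
    have hne : F (shv s (0 : Fin N → ℝ)) s ≠ 0 := by rw [hv1]; exact (hdiag s).ne'
    have e1 : ∀ᶠ p : ((Fin N → ℝ) × ℝ) × ℝ in 𝓝 (0, s), α / 2 < F (shv p.2 p.1.1) p.2 := by
      refine hc1.continuousAt.eventually (lt_mem_nhds ?_)
      change α / 2 < F (shv s (0 : Fin N → ℝ)) s
      rw [hv1]; linarith [hαle s hs]
    have hc3 : ContinuousAt (fun p : ((Fin N → ℝ) × ℝ) × ℝ =>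
        |pderZ F (shv p.2 p.1.1) (p.2 + p.1.2) / F (shv p.2 p.1.1) p.2 - β p.2|) (0, s) :=
      ((hc2.continuousAt.div hc1.continuousAt hne).sub
        (hβ1.continuous.comp continuous_snd).continuousAt).abs
    have hval : |pderZ F (shv s (0 : Fin N → ℝ)) (s + 0) / F (shv s (0 : Fin N → ℝ)) s - β s| < κ / 2 := by
      rw [shv_zero, add_zero]
      simp only [hβdef, sub_self, abs_zero]
      positivity
    have e2 : ∀ᶠ p : ((Fin N → ℝ) × ℝ) × ℝ in 𝓝 (0, s),
        |pderZ F (shv p.2 p.1.1) (p.2 + p.1.2) / F (shv p.2 p.1.1) p.2 - β p.2| < κ / 2 :=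
      hc3.eventually (gt_mem_nhds hval)
    exact e1.and e2
  obtain ⟨δ₁, hδ₁, htube'⟩ := Metric.eventually_nhds_iff.1 htube
  set δ := min (δ₁ / 2) (1 / 2) with hδdef
  have hδ : 0 < δ := by positivity
  have hδ2 : δ ≤ 1 / 2 := min_le_right _ _
  have hδ3 : δ < δ₁ := (min_le_left _ _).trans_lt (by linarith)
  have htu : ∀ y : Fin N → ℝ, ‖y‖ ≤ δ → ∀ z : ℝ, |z| ≤ δ → ∀ s ∈ Icc (0:ℝ) 1,
      (α / 2 < F (shv s y) s ∧ |pderZ F (shv s y) (s + z) / F (shv s y) s - β s| < κ / 2) := by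
    intro y hy z hz
    refine htube' (y := (y, z)) ?_
    rw [dist_zero_right]
    exact (max_le hy hz).trans_lt hδ3
  have hpos : ∀ s : ℝ, ∀ y : Fin N → ℝ, ‖y‖ ≤ δ → 0 < F (shv s y) s := by
    intro s y hy
    have h1 := perI hper (shv (Int.fract s) y) (Int.fract s) ⌊s⌋
    rw [← shv_add_int, Int.fract_add_floor] at h1
    rw [h1]
    have := (htu y hy 0 (by simpa using hδ.le) _ ⟨Int.fract_nonneg s, (Int.fract_lt_one s).le⟩).1
    linarith
  refine ⟨1, one_pos, fun D _ => ⟨κ * δ * α / 4, by positivity, ?_⟩⟩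
  intro H hH1 hHp hHr
  have hHb : ∀ s : ℝ, ∀ y : Fin N → ℝ, ‖y‖ ≤ δ → ∀ i, |H (shv s y) i| ≤ κ * δ * α / 4 := by
    intro s y hy i
    refine (normB_bound hN H hH1.continuous hHp _ ?_ i).trans hHr.le
    intro j k
    have h1 := (norm_le_pi_norm y j).trans hy
    have h2 := (norm_le_pi_norm y k).trans hy
    rw [Real.norm_eq_abs, abs_le] at h1 h2
    simp only [shv]
    rw [abs_le]; constructor <;> linarith
  set S : ℝ → (Fin N → ℝ) → (Fin N → ℝ) := fun s y i =>
    (F (shv s y) (s + y i) - F (shv s y) s + H (shv s y) i) / F (shv s y) s - β s * y i with hS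
  have hS1 : ContDiffOn ℝ 1 (fun p : ℝ × (Fin N → ℝ) => S p.1 p.2) (univ ×ˢ closedBall 0 δ) := by
    have hC1 : ContDiff ℝ 1 (fun p : (Fin N → ℝ) × ℝ => F p.1 p.2) := hC2.of_le (by norm_num)
    rw [contDiffOn_pi]
    intro i
    have a1 : ContDiff ℝ 1 (fun p : ℝ × (Fin N → ℝ) => F (shv p.1 p.2) (p.1 + p.2 i)) :=
      hC1.comp (shv_contDiff.prodMk (by fun_prop))
    have a2 : ContDiff ℝ 1 (fun p : ℝ × (Fin N → ℝ) => F (shv p.1 p.2) p.1) :=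
      hC1.comp (shv_contDiff.prodMk contDiff_fst)
    have a3 : ContDiff ℝ 1 (fun p : ℝ × (Fin N → ℝ) => H (shv p.1 p.2) i) :=
      (contDiff_pi.1 (hH1.comp shv_contDiff)) i
    have a4 : ContDiff ℝ 1 (fun p : ℝ × (Fin N → ℝ) => β p.1 * p.2 i) :=
      (hβ1.comp contDiff_fst).mul (by fun_prop)
    refine ContDiffOn.sub (ContDiffOn.div ((a1.sub a2).add a3).contDiffOn a2.contDiffOn ?_) a4.contDiffOn
    rintro ⟨s, y⟩ ⟨-, hy⟩
    exact (hpos s y (by simpa using hy)).ne'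
  obtain ⟨K, hK⟩ : ∃ K, LipschitzOnWith K (fun p : ℝ × (Fin N → ℝ) => S p.1 p.2)
      (Icc 0 1 ×ˢ closedBall 0 δ) := by
    refine (hS1.mono (prod_mono_left (subset_univ _))).exists_lipschitzOnWith one_ne_zero ?_ ?_
    · exact (convex_Icc _ _).prod (convex_closedBall _ _)
    · exact isCompact_Icc.prod (isCompact_closedBall _ _)
  have hA1 : ∀ s ∈ Icc (0:ℝ) 1, LipschitzOnWith K (S s) (closedBall 0 δ) := by
    intro s hs
    refine LipschitzOnWith.of_dist_le_mul fun x hx y hy => ?_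
    have := hK.dist_le_mul (s, x) ⟨hs, hx⟩ (s, y) ⟨hs, hy⟩
    simpa [Prod.dist_eq] using this
  have hA2 : ∀ s, ∀ y ∈ closedBall (0 : Fin N → ℝ) δ, S (s + 1) y = S s y := by
    intro s y _
    ext i
    simp only [hS]
    have h0 : shv (s + 1) y = fun i => shv s y i + 1 := by
      have := shv_add_int s y 1
      simpa using this
    rw [h0, hper, hHp, hβp, add_right_comm, hper]
  have hA3 : ∀ s ∈ Icc (0:ℝ) 1, ∀ y ∈ closedBall (0 : Fin N → ℝ) δ, ‖S s y‖ ≤ κ * δ := by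
    intro s hs y hy
    have hy' : ‖y‖ ≤ δ := by simpa using hy
    rw [pi_norm_le_iff_of_nonneg (by positivity)]
    intro i
    have hyi : |y i| ≤ δ := (norm_le_pi_norm y i).trans hy'
    have hF0 := hpos s y hy'
    have hFα := (htu y hy' 0 (by simpa using hδ.le) s hs).1
    -- mean value
    have hmv : |(F (shv s y) (s + y i) / F (shv s y) s - β s * y i) -
        (F (shv s y) (s + 0) / F (shv s y) s - β s * 0)| ≤ κ / 2 * |y i - 0| := by
      refine Convex.norm_image_sub_le_of_norm_hasDerivWithin_le
        (f := fun u => F (shv s y) (s + u) / F (shv s y) s - β s * u)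
        (f' := fun u => pderZ F (shv s y) (s + u) / F (shv s y) s - β s)
        (s := Icc (-δ) δ) ?_ ?_ (convex_Icc _ _) ⟨by linarith, hδ.le⟩ (abs_le.1 hyi)
      · intro u _
        have h1 : HasDerivAt (fun u => F (shv s y) (s + u)) (pderZ F (shv s y) (s + u)) u :=
          (hasDerivAt_Z hC2 (shv s y) (s + u)).comp_const_add s u
        have h2 : HasDerivAt (fun u => β s * u) (β s) u := by
          simpa using (hasDerivAt_id u).const_mul (β s)
        exact ((h1.div_const _).sub h2).hasDerivWithinAt
      · intro u hu
        exact (htu y hy' u (abs_le.2 hu) s hs).2.le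
    have hHi := hHb s y hy' i
    have hHq : |H (shv s y) i / F (shv s y) s| ≤ κ * δ / 2 := by
      rw [abs_div, abs_of_pos hF0, div_le_iff₀ hF0]
      nlinarith [mul_pos hκ hδ]
    have hsplit : S s y i = ((F (shv s y) (s + y i) / F (shv s y) s - β s * y i) -
        (F (shv s y) (s + 0) / F (shv s y) s - β s * 0)) + H (shv s y) i / F (shv s y) s := by
      simp only [hS, add_zero]; ring
    rw [Real.norm_eq_abs, hsplit]
    refine (abs_add_le _ _).trans ?_
    rw [sub_zero] at hmv
    nlinarith
  obtain ⟨Y, hYp, hYb, hYd⟩ := hmain δ hδ S K hA1 hS1.continuousOn hA2 hA3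
  -- reparametrise
  have hYb' : ∀ s, ‖Y s‖ ≤ δ := fun s => by simpa using hYb s
  have hYc : Continuous Y := continuous_iff_continuousAt.2 fun s => (hYd s).continuousAt
  have hshY : Continuous (fun s => shv s (Y s)) :=
    (shv_contDiff (n := 0)).continuous.comp (continuous_id.prodMk hYc)
  obtain ⟨θ, ρ, hρ, hθd, hθp⟩ := reparam (fun s => F (shv s (Y s)) s)
    (hC0.comp (hshY.prodMk continuous_id)) (fun s => hpos s _ (hYb' s)) (by
      intro s
      have h0 : shv (s + 1) (Y s) = fun i => shv s (Y s) i + 1 := by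
        have := shv_add_int s (Y s) 1
        simpa using this
      simp only [hYp]
      rw [h0, hper])
  set X : ℝ → Fin N → ℝ := fun t => shv (θ t) (Y (θ t)) with hX
  have hθc : Continuous θ := continuous_iff_continuousAt.2 fun s => (hθd s).continuousAt
  have hXc : Continuous X := hshY.comp hθc
  have hXd : ∀ t i, HasDerivAt (fun τ => X τ i) (F (X t) (X t i) + H (X t) i) t := by
    intro t i
    have h1 := (hasDerivAt_pi.1 (hYd (θ t)) i)
    have h2 := (hθd t).add (HasDerivAt.comp t h1 (hθd t))
    refine h2.congr_deriv ?_
    have h3 := hpos (θ t) _ (hYb' (θ t))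
    simp only [hS, hX, Pi.add_apply, Pi.smul_apply, smul_eq_mul]
    have h4 : shv (θ t) (Y (θ t)) i = θ t + Y (θ t) i := rfl
    rw [h4]
    field_simp
    ring
  refine ⟨X t₀, ρ, hρ, fun i t => X t i - ρ * t, ?_, ?_, X, rfl, fun t _ i => hXd t i, ?_⟩
  · intro i
    have hd : ∀ t, HasDerivAt (fun t => X t i - ρ * t) (F (X t) (X t i) + H (X t) i - ρ) t := by
      intro t
      have h2 : HasDerivAt (fun t => ρ * t) ρ t := by
        simpa using (hasDerivAt_id t).const_mul ρ
      exact (hXd t i).sub h2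
    rw [contDiff_one_iff_deriv]
    refine ⟨fun t => (hd t).differentiableAt, ?_⟩
    rw [show deriv (fun t => X t i - ρ * t) = fun t => F (X t) (X t i) + H (X t) i - ρ from
      funext fun t => (hd t).deriv]
    have c1 : Continuous fun t => F (X t) (X t i) :=
      hC0.comp (hXc.prodMk ((continuous_apply i).comp hXc))
    have c2 : Continuous fun t => H (X t) i :=
      (continuous_apply i).comp (hH1.continuous.comp hXc)
    exact (c1.add c2).sub continuous_const
  · intro i t
    simp only [hX, hθp, hYp, shv]
    field_simp
    ring
  · intro t _ i
    ring
end

section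
/- Let N ≥ 2, let F : ℝᴺ × ℝ → ℝ and H : ℝᴺ → ℝᴺ be C¹ and 𝟙-periodic, and assume solutions of the system xᵢ' = F(X, xᵢ) + Hᵢ(X) are unique for each initial condition and that the solution X with X(t₀) = X* is defined for all t ≥ t₀. If there exists θ* > 0 such that X(t₀ + θ*) = X* + 𝟙, then X(t + θ*) = X(t) + 𝟙 for all t ≥ t₀, and consequently, setting ρ = 1/θ*, the functions Ψᵢ(t) = xᵢ(t) − ρ t are periodic with period θ* on [t₀, ∞). -/
open Real Set

/-- Let `F`, `H` be `C¹` and `𝟙`-periodic, assume uniqueness of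
solutions of the perturbed system for a given initial condition, and let `X` be a
solution on `[t₀, ∞)` with `X(t₀) = X*`. If `X(t₀ + θ*) = X* + 𝟙` for some
`θ* > 0`, then `X(t + θ*) = X(t) + 𝟙` for all `t ≥ t₀`; consequently, with
`ρ = 1/θ*`, the functions `Ψᵢ(t) = xᵢ(t) − ρ t` are `θ*`-periodic on `[t₀, ∞)`. -/
theorem shift_periodicity
    (N : ℕ) (hN : 2 ≤ N)
    (F : (Fin N → ℝ) → ℝ → ℝ)
    (hFsmooth : ContDiff ℝ 1 (fun p : (Fin N → ℝ) × ℝ => F p.1 p.2))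
    (hFper : ∀ (Y : Fin N → ℝ) (z : ℝ), F (fun i => Y i + 1) (z + 1) = F Y z)
    (H : (Fin N → ℝ) → Fin N → ℝ)
    (hHsmooth : ContDiff ℝ 1 (fun Y => H Y))
    (hHper : ∀ Y : Fin N → ℝ, H (fun i => Y i + 1) = H Y)
    (t₀ : ℝ)
    (huniq : ∀ Y Z : ℝ → Fin N → ℝ,
      (∀ t : ℝ, t₀ ≤ t → ∀ i,
        HasDerivAt (fun τ => Y τ i) (F (Y t) (Y t i) + H (Y t) i) t) →
      (∀ t : ℝ, t₀ ≤ t → ∀ i,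
        HasDerivAt (fun τ => Z τ i) (F (Z t) (Z t i) + H (Z t) i) t) →
      Y t₀ = Z t₀ → ∀ t : ℝ, t₀ ≤ t → Y t = Z t)
    (Xstar : Fin N → ℝ) (θstar : ℝ) (hθ : 0 < θstar)
    (X : ℝ → Fin N → ℝ)
    (hX0 : X t₀ = Xstar)
    (hX : ∀ t : ℝ, t₀ ≤ t → ∀ i,
      HasDerivAt (fun τ => X τ i) (F (X t) (X t i) + H (X t) i) t)
    (hreturn : X (t₀ + θstar) = fun i => Xstar i + 1) :
    (∀ t : ℝ, t₀ ≤ t → X (t + θstar) = fun i => X t i + 1) ∧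
    (∀ t : ℝ, t₀ ≤ t → ∀ i,
      X (t + θstar) i - (1 / θstar) * (t + θstar) = X t i - (1 / θstar) * t) := by
  have key : ∀ t : ℝ, t₀ ≤ t → X (t + θstar) = fun i => X t i + 1 := by
    refine huniq (fun t => X (t + θstar)) (fun t i => X t i + 1) ?_ ?_ ?_
    · intro t ht i
      exact (hX (t + θstar) (by linarith) i).comp_add_const t θstar
    · intro t ht i
      have h := (hX t ht i).add_const 1
      simp only [hFper, hHper]
      exact h
    · simp only [hreturn, hX0]
  refine ⟨key, fun t ht i => ?_⟩
  rw [key t ht]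
  field_simp
  ring
end
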